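/- Under the non-stationary zero-returns model with mixing, and with the kernel estimators defined from a kernel and bandwidth satisfying the kernel and bandwidth assumption, for each h = 1,…,m the statistic γ̂_{ar²}(h) = (n−h)^{−1} Σ_{t=1+h}^n r_t² · p̂_{t,t−h}/p̂_t converges in probability, as n → ∞, to ∫₀¹ v(s)² g_h(s) ds. -/

import Mathlib

open MeasureTheory ProbabilityTheory Filter Set

namespace ZeroReturnsNS

variable {Ω : Type*} [MeasurableSpace Ω]

/-- A function is piecewise Lipschitz on `(0,1]` if `(0,1]` is a finite disjoint union of
intervals on each of which the function is Lipschitz. -/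
def PiecewiseLipschitzOn01 (f : ℝ → ℝ) : Prop :=
  ∃ (p : ℕ) (I : Fin p → Set ℝ) (C : Fin p → NNReal),
    (∀ l, (I l).OrdConnected) ∧
    Pairwise (Function.onFun Disjoint I) ∧
    (⋃ l, I l) = Set.Ioc (0 : ℝ) 1 ∧
    ∀ l, LipschitzOnWith (C l) f (I l)

/-- The triangular array of returns `r_t = v(t/n) ε_t`. -/
noncomputable def rproc (v : ℝ → ℝ) (ε : ℕ → ℕ → Ω → ℝ) (n t : ℕ) (ω : Ω) : ℝ :=
  v ((t : ℝ) / n) * ε n t ω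

/-- The zero-return indicator `a_t = 1_{r_t ≠ 0}`. -/
noncomputable def aproc (v : ℝ → ℝ) (ε : ℕ → ℕ → Ω → ℝ) (n t : ℕ) (ω : Ω) : ℝ :=
  if rproc v ε n t ω ≠ 0 then 1 else 0

/-- The σ-field `σ(ε_u : u ≤ t)` of the past of the `n`-th row of the array. -/
noncomputable def pastField (ε : ℕ → ℕ → Ω → ℝ) (n t : ℕ) : MeasurableSpace Ω :=
  ⨆ u ∈ {u : ℕ | u ≤ t}, MeasurableSpace.comap (ε n u) inferInstance

/-- The σ-field `σ(ε_u : u ≥ t)` of the future of the `n`-th row of the array. -/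
noncomputable def futureField (ε : ℕ → ℕ → Ω → ℝ) (n t : ℕ) : MeasurableSpace Ω :=
  ⨆ u ∈ {u : ℕ | t ≤ u}, MeasurableSpace.comap (ε n u) inferInstance

/-- The strong (α-)mixing coefficients of `(ε_t)`:
`α_ε(h) = sup { |P(A∩B) - P(A)P(B)| : A ∈ σ(ε_u : u ≤ t), B ∈ σ(ε_u : u ≥ t+h) }`. -/
noncomputable def alphaMix (μ : Measure Ω) (ε : ℕ → ℕ → Ω → ℝ) (h : ℕ) : ℝ :=
  ⨆ n : ℕ, ⨆ t : ℕ, sSup {x : ℝ | ∃ A B : Set Ω,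
    MeasurableSet[pastField ε n t] A ∧ MeasurableSet[futureField ε n (t + h)] B ∧
    x = |(μ (A ∩ B)).toReal - (μ A).toReal * (μ B).toReal|}

/-- `K_{ti} = K((t-i)/(nb))` for `t ≠ i`, and `K_{tt} = 0`. -/
noncomputable def Kw (K : ℝ → ℝ) (b : ℕ → ℝ) (n t i : ℕ) : ℝ :=
  if t = i then 0 else K (((t : ℝ) - (i : ℝ)) / ((n : ℝ) * b n))

/-- The kernel weights `w_{tj}(b) = K_{tj} / Σ_{i=1}^n K_{ti}`. -/
noncomputable def wgt (K : ℝ → ℝ) (b : ℕ → ℝ) (n t j : ℕ) : ℝ :=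
  Kw K b n t j / ∑ i ∈ Finset.Icc 1 n, Kw K b n t i

/-- The kernel estimator `p̂_t = Σ_{j=1}^n w_{tj}(b) a_j` of `P(a_t = 1)`. -/
noncomputable def phat (v : ℝ → ℝ) (ε : ℕ → ℕ → Ω → ℝ) (K : ℝ → ℝ) (b : ℕ → ℝ)
    (n t : ℕ) (ω : Ω) : ℝ :=
  ∑ j ∈ Finset.Icc 1 n, wgt K b n t j * aproc v ε n j ω

/-- The kernel estimator `p̂_{t,t-h} = Σ_{j=1+h}^n w_{tj}(b) a_j a_{j-h}` of
`P(a_t a_{t-h} = 1)`. -/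
noncomputable def phat2 (v : ℝ → ℝ) (ε : ℕ → ℕ → Ω → ℝ) (K : ℝ → ℝ) (b : ℕ → ℝ)
    (n h t : ℕ) (ω : Ω) : ℝ :=
  ∑ j ∈ Finset.Icc (h + 1) n, wgt K b n t j * (aproc v ε n j ω * aproc v ε n (j - h) ω)

/-- `γ̂_{ar²}(h) = (n-h)⁻¹ Σ_{t=1+h}^n r_t² p̂_{t,t-h}/p̂_t`
(terms with `p̂_t = 0` are set to zero). -/
noncomputable def gammaAr2 (v : ℝ → ℝ) (ε : ℕ → ℕ → Ω → ℝ) (K : ℝ → ℝ) (b : ℕ → ℝ)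
    (n h : ℕ) (ω : Ω) : ℝ :=
  ((n : ℝ) - (h : ℝ))⁻¹ * ∑ t ∈ Finset.Icc (h + 1) n, (rproc v ε n t ω) ^ 2 *
    (if phat v ε K b n t ω = 0 then 0 else phat2 v ε K b n h t ω / phat v ε K b n t ω)

/-- `γ̂_0(h) = n⁻¹ Σ_{t=1+h}^n r_t r_{t-h}`. -/
noncomputable def gammaHat0 (v : ℝ → ℝ) (ε : ℕ → ℕ → Ω → ℝ) (n h : ℕ) (ω : Ω) : ℝ :=
  (n : ℝ)⁻¹ * ∑ t ∈ Finset.Icc (h + 1) n, rproc v ε n t ω * rproc v ε n (t - h) ω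

/-- `γ̂_a(h) = n⁻¹ Σ_{t=1+h}^n a_t a_{t-h}`. -/
noncomputable def gammaHatA (v : ℝ → ℝ) (ε : ℕ → ℕ → Ω → ℝ) (n h : ℕ) (ω : Ω) : ℝ :=
  (n : ℝ)⁻¹ * ∑ t ∈ Finset.Icc (h + 1) n, aproc v ε n t ω * aproc v ε n (t - h) ω

/-- `ρ̂_0(h) = γ̂_0(h)/γ̂_0(0)`. -/
noncomputable def rhoHat0 (v : ℝ → ℝ) (ε : ℕ → ℕ → Ω → ℝ) (n h : ℕ) (ω : Ω) : ℝ :=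
  gammaHat0 v ε n h ω / gammaHat0 v ε n 0 ω

/-- `ρ̂_vpr(h) = (γ̂_0(0)/γ̂_{ar²}(h)) ρ̂_0(h)`. -/
noncomputable def rhoHatVpr (v : ℝ → ℝ) (ε : ℕ → ℕ → Ω → ℝ) (K : ℝ → ℝ) (b : ℕ → ℝ)
    (n h : ℕ) (ω : Ω) : ℝ :=
  (gammaHat0 v ε n 0 ω / gammaAr2 v ε K b n h ω) * rhoHat0 v ε n h ω

/-- `ρ̂_pr(h) = ρ̂_0(h) γ̂_a(0)/γ̂_a(h)`. -/
noncomputable def rhoHatPr (v : ℝ → ℝ) (ε : ℕ → ℕ → Ω → ℝ) (n h : ℕ) (ω : Ω) : ℝ :=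
  rhoHat0 v ε n h ω * (gammaHatA v ε n 0 ω / gammaHatA v ε n h ω)

end ZeroReturnsNS

namespace ZeroReturnsNS

/-!
The statistic is compared in `L¹` with the Riemann sum of `v² g_h`, in two steps.

Writing `p = g_0` and `q = g_h`, replace `p̂_{t,t-h} / p̂_t` by `q(t/n) / p(t/n)`. At a point
`t/n → s` of the open unit interval where `p` and `q` are continuous, the kernel weights are
`O(1/(nb))` and sum to one, so mixing makes the variance of the kernel estimators vanish, and their
bias vanishes by continuity. The ratio error thus tends to `0` in `L¹` and is bounded by `1`, so
that uniform integrability of `ε_t²` absorbs the factor `r_t²`; dominated convergence over `s` sums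
the errors.

What remains is the average of `v² (q/p) ε_t²`, centred at `v² q` because identifiability gives
`E ε_t² = p(t/n)`. It obeys an `L¹` law of large numbers: truncate `ε_t²`, bound the variance of the
truncated average by the mixing coefficients, and control the tails by uniform integrability.
-/

section Averages

lemma intervalIntegral_comp_natCeil (F : ℕ → ℝ) (n : ℕ) :
    ∫ x in (0 : ℝ)..n, F ⌈x⌉₊ = ∑ t ∈ Finset.Icc 1 n, F t := by
  have hstep (k : ℕ) : EqOn (fun x : ℝ => F ⌈x⌉₊) (fun _ => F (k + 1))
      (uIoc (k : ℝ) (k + 1 : ℕ)) := by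
    intro x hx
    rw [uIoc_of_le (by simp)] at hx
    have hceil : ⌈x⌉₊ = k + 1 := (Nat.ceil_eq_iff k.succ_ne_zero).2 ⟨by simpa using hx.1, hx.2⟩
    simp only [hceil]
  have hint (k : ℕ) : IntervalIntegrable (fun x : ℝ => F ⌈x⌉₊) volume k (k + 1 : ℕ) :=
    (intervalIntegrable_congr (hstep k)).2 intervalIntegrable_const
  calc ∫ x in (0 : ℝ)..n, F ⌈x⌉₊
      = ∑ k ∈ Finset.range n, ∫ x in (k : ℝ)..(k + 1 : ℕ), F ⌈x⌉₊ := by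
        simpa using (intervalIntegral.sum_integral_adjacent_intervals
          (a := fun k : ℕ => (k : ℝ)) fun k _ => hint k).symm
    _ = ∑ k ∈ Finset.range n, F (k + 1) := Finset.sum_congr rfl fun k _ => by
        rw [intervalIntegral.integral_congr_ae (ae_of_all _ fun _ hx => hstep k hx)]
        simp
    _ = ∑ t ∈ Finset.Icc 1 n, F t := by
        rw [Finset.range_eq_Ico, Finset.sum_Ico_add' F 0 n 1]
        rfl

lemma setIntegral_comp_natCeil_mul (F : ℕ → ℝ) {n : ℕ} (hn : n ≠ 0) :
    ∫ s in Ioc (0 : ℝ) 1, F ⌈(n : ℝ) * s⌉₊ = (n : ℝ)⁻¹ * ∑ t ∈ Finset.Icc 1 n, F t := by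
  rw [← intervalIntegral.integral_of_le zero_le_one,
    intervalIntegral.integral_comp_mul_left (fun x => F ⌈x⌉₊) (Nat.cast_ne_zero.2 hn),
    mul_zero, mul_one, intervalIntegral_comp_natCeil, smul_eq_mul]

lemma tendsto_average_of_ae_tendsto {F : ℕ → ℕ → ℝ} {f : ℝ → ℝ} {C : ℝ} (h : ℕ)
    (hC : ∀ n t, h < t → t ≤ n → |F n t| ≤ C)
    (hF : ∀ᵐ s ∂volume.restrict (Ioc (0 : ℝ) 1),
      Tendsto (fun n : ℕ => F n ⌈(n : ℝ) * s⌉₊) atTop (nhds (f s))) :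
    Tendsto (fun n : ℕ => ((n : ℝ) - h)⁻¹ * ∑ t ∈ Finset.Icc (h + 1) n, F n t) atTop
      (nhds (∫ s in Ioc (0 : ℝ) 1, f s)) := by
  set F₀ : ℕ → ℕ → ℝ := fun n t => if h < t then F n t else 0
  have hF₀ : Tendsto (fun n : ℕ => ∫ s in Ioc (0 : ℝ) 1, F₀ n ⌈(n : ℝ) * s⌉₊) atTop
      (nhds (∫ s in Ioc (0 : ℝ) 1, f s)) := by
    refine tendsto_integral_of_dominated_convergence (fun _ => |C|) (fun n => ?_)
      (integrable_const _) (fun n => ?_) ?_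
    · exact ((measurable_from_top (f := F₀ n)).comp
        (Nat.measurable_ceil.comp (measurable_const_mul _))).aestronglyMeasurable
    · filter_upwards [ae_restrict_mem measurableSet_Ioc] with s hs
      have hle : ⌈(n : ℝ) * s⌉₊ ≤ n := Nat.ceil_le.2 (mul_le_of_le_one_right n.cast_nonneg hs.2)
      by_cases ht : h < ⌈(n : ℝ) * s⌉₊
      · simpa [F₀, ht] using (hC n _ ht hle).trans (le_abs_self C)
      · simp [F₀, ht]
    · filter_upwards [hF, ae_restrict_mem measurableSet_Ioc] with s hs hs01
      have hceil : Tendsto (fun n : ℕ => ⌈(n : ℝ) * s⌉₊) atTop atTop :=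
        tendsto_nat_ceil_atTop.comp (tendsto_natCast_atTop_atTop.atTop_mul_const hs01.1)
      refine hs.congr' ?_
      filter_upwards [hceil.eventually_gt_atTop h] with n hn
      simp [F₀, hn]
  have hratio : Tendsto (fun n : ℕ => (n : ℝ) / (n - h)) atTop (nhds 1) := by
    simpa [sub_eq_add_neg] using tendsto_natCast_div_add_atTop (-(h : ℝ))
  refine (one_mul (∫ s in Ioc (0 : ℝ) 1, f s) ▸ hratio.mul hF₀).congr' ?_
  filter_upwards [eventually_ne_atTop 0] with n hn
  have hfilter : (Finset.Icc 1 n).filter (h < ·) = Finset.Icc (h + 1) n := by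
    ext t
    simp only [Finset.mem_filter, Finset.mem_Icc]
    omega
  rw [setIntegral_comp_natCeil_mul _ hn, ← Finset.sum_filter, hfilter, ← mul_assoc, div_eq_inv_mul,
    mul_inv_cancel_right₀ (Nat.cast_ne_zero.2 hn)]

lemma tendsto_natCeil_mul_div {s : ℝ} (hs : 0 ≤ s) :
    Tendsto (fun n : ℕ => (⌈(n : ℝ) * s⌉₊ : ℝ) / n) atTop (nhds s) := by
  simpa [Function.comp_def, mul_comm] using
    (tendsto_nat_ceil_mul_div_atTop hs).comp tendsto_natCast_atTop_atTop

lemma natCast_div_mem_Ioc {n t : ℕ} (ht : 1 ≤ t) (htn : t ≤ n) : (t : ℝ) / n ∈ Ioc (0 : ℝ) 1 := by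
  have hn : (0 : ℝ) < n := by exact_mod_cast ht.trans htn
  exact ⟨by positivity, (div_le_one hn).2 (by exact_mod_cast htn)⟩

lemma tendsto_average_comp_div {f : ℝ → ℝ} {C : ℝ} (h : ℕ)
    (hC : ∀ n t : ℕ, h < t → t ≤ n → |f ((t : ℝ) / n)| ≤ C)
    (hf : ∀ᵐ s ∂volume.restrict (Ioc (0 : ℝ) 1), ContinuousAt f s) :
    Tendsto (fun n : ℕ => ((n : ℝ) - h)⁻¹ * ∑ t ∈ Finset.Icc (h + 1) n, f ((t : ℝ) / n)) atTop
      (nhds (∫ s in Ioc (0 : ℝ) 1, f s)) := by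
  refine tendsto_average_of_ae_tendsto h hC ?_
  filter_upwards [hf, ae_restrict_mem measurableSet_Ioc] with s hs hs01
  exact hs.tendsto.comp (tendsto_natCeil_mul_div hs01.1.le)

lemma PiecewiseLipschitzOn01.ae_continuousAt {f : ℝ → ℝ} (hf : PiecewiseLipschitzOn01 f) :
    ∀ᵐ s ∂volume.restrict (Ioc (0 : ℝ) 1), ContinuousAt f s := by
  obtain ⟨p, I, C, hI, -, hU, hL⟩ := hf
  have hfrontier : ∀ᵐ s : ℝ, ∀ l, s ∉ frontier (I l) := ae_all_iff.2 fun l =>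
    measure_eq_zero_iff_ae_notMem.1 ((hI l).convex.addHaar_frontier volume)
  filter_upwards [ae_restrict_of_ae hfrontier, ae_restrict_mem measurableSet_Ioc] with s hs hs01
  obtain ⟨l, hl⟩ := mem_iUnion.1 (hU ▸ hs01)
  have hinterior : s ∈ interior (I l) := by
    by_contra hnot
    exact hs l ⟨subset_closure hl, hnot⟩
  exact (hL l).continuousOn.continuousAt (mem_interior_iff_mem_nhds.1 hinterior)

end Averages

section Covariance

variable {Ω : Type*} {mΩ : MeasurableSpace Ω} {μ : Measure Ω}

-- Layer-cake formula `X ω = ∫ s in 0..T, 1_{s ≤ X ω}`, followed by Fubini.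
lemma abs_integral_mul_le_of_abs_setIntegral_le [SFinite μ] {X W : Ω → ℝ} {T a : ℝ}
    (hX : Measurable X) (hX0 : ∀ ω, 0 ≤ X ω) (hXT : ∀ ω, X ω ≤ T) (hT : 0 ≤ T)
    (hW : Integrable W μ) (ha : ∀ s, |∫ ω in {ω | s ≤ X ω}, W ω ∂μ| ≤ a) :
    |∫ ω, X ω * W ω ∂μ| ≤ T * a := by
  have hlayer (ω : Ω) : X ω * W ω = ∫ s in Ioc 0 T, (Iic (X ω)).indicator (fun _ => W ω) s := by
    rw [setIntegral_indicator measurableSet_Iic, Ioc_inter_Iic, inf_eq_right.2 (hXT ω),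
      setIntegral_const, Real.volume_real_Ioc_of_le (hX0 ω), sub_zero, smul_eq_mul]
  have hprod : Integrable (fun z : Ω × ℝ => (Iic (X z.1)).indicator (fun _ => W z.1) z.2)
      (μ.prod (volume.restrict (Ioc 0 T))) :=
    (hW.comp_fst (volume.restrict (Ioc 0 T))).indicator
      (measurableSet_le measurable_snd (hX.comp measurable_fst))
  have hslice (s : ℝ) : ∫ ω, (Iic (X ω)).indicator (fun _ => W ω) s ∂μ =
      ∫ ω in {ω | s ≤ X ω}, W ω ∂μ :=
    integral_indicator (measurableSet_le measurable_const hX)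
  calc |∫ ω, X ω * W ω ∂μ|
      = |∫ s in Ioc 0 T, ∫ ω in {ω | s ≤ X ω}, W ω ∂μ| := by
        simp_rw [hlayer, ← hslice]
        rw [integral_integral_swap hprod]
    _ ≤ a * volume.real (Ioc 0 T) :=
        norm_setIntegral_le_of_norm_le_const (f := fun s => ∫ ω in {ω | s ≤ X ω}, W ω ∂μ)
          measure_Ioc_lt_top fun s _ => ha s
    _ = T * a := by rw [Real.volume_real_Ioc_of_le hT, sub_zero, mul_comm]

lemma memLp_of_nonneg_of_le [IsFiniteMeasure μ] {X : Ω → ℝ} {T : ℝ} (p : ENNReal)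
    (hX : Measurable X) (hX0 : ∀ ω, 0 ≤ X ω) (hXT : ∀ ω, X ω ≤ T) : MemLp X p μ :=
  .of_bound hX.aestronglyMeasurable T <| ae_of_all _ fun ω => by
    simpa only [Real.norm_eq_abs, abs_of_nonneg (hX0 ω)] using hXT ω

lemma memLp_indicator_one [IsFiniteMeasure μ] (p : ENNReal) {A : Set Ω} (hA : MeasurableSet A) :
    MemLp (A.indicator 1 : Ω → ℝ) p μ :=
  memLp_indicator_const p hA 1 (Or.inr (measure_ne_top μ _))

lemma covariance_eq_integral_mul_sub [IsProbabilityMeasure μ] {X Y : Ω → ℝ} (hX : MemLp X 2 μ)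
    (hY : MemLp Y 2 μ) : cov[X, Y; μ] = ∫ ω, X ω * (Y ω - μ[Y]) ∂μ := by
  have hXY : Integrable (fun ω => X ω * Y ω) μ := hX.integrable_mul hY
  simp_rw [covariance_eq_sub hX hY, mul_sub]
  rw [integral_sub hXY ((hX.integrable one_le_two).mul_const _), integral_mul_const]
  rfl

lemma covariance_indicator_one [IsProbabilityMeasure μ] {A B : Set Ω} (hA : MeasurableSet A)
    (hB : MeasurableSet B) :
    cov[A.indicator 1, B.indicator 1; μ] = μ.real (A ∩ B) - μ.real A * μ.real B := by
  have hmul : (A.indicator 1 * B.indicator 1 : Ω → ℝ) = (A ∩ B).indicator 1 := by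
    rw [inter_indicator_one]
  rw [covariance_eq_sub (memLp_indicator_one 2 hA) (memLp_indicator_one 2 hB), hmul,
    integral_indicator_one (hA.inter hB), integral_indicator_one hA,
    integral_indicator_one hB]

lemma abs_covariance_le_of_indicator [IsProbabilityMeasure μ] {X Y : Ω → ℝ} {T a : ℝ}
    (hX : Measurable X) (hX0 : ∀ ω, 0 ≤ X ω) (hXT : ∀ ω, X ω ≤ T) (hT : 0 ≤ T)
    (hY : MemLp Y 2 μ) (ha : ∀ s, |cov[{ω | s ≤ X ω}.indicator 1, Y; μ]| ≤ a) :
    |cov[X, Y; μ]| ≤ T * a := by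
  rw [covariance_eq_integral_mul_sub (memLp_of_nonneg_of_le 2 hX hX0 hXT) hY]
  refine abs_integral_mul_le_of_abs_setIntegral_le hX hX0 hXT hT
    ((hY.integrable one_le_two).sub (integrable_const _)) fun s => ?_
  have hA : MeasurableSet {ω | s ≤ X ω} := measurableSet_le measurable_const hX
  convert ha s using 2
  rw [covariance_eq_integral_mul_sub (memLp_indicator_one 2 hA) hY, ← integral_indicator hA]
  congr 1 with ω
  by_cases hω : ω ∈ {ω | s ≤ X ω} <;> simp only [indicator, hω, if_true, if_false, Pi.one_apply,
    one_mul, zero_mul]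

lemma abs_covariance_le_of_mixing [IsProbabilityMeasure μ] {m₁ m₂ : MeasurableSpace Ω}
    (hm₁ : m₁ ≤ mΩ) (hm₂ : m₂ ≤ mΩ) {X Y : Ω → ℝ} {T a : ℝ} (hT : 0 ≤ T)
    (ha : ∀ A B, MeasurableSet[m₁] A → MeasurableSet[m₂] B →
      |μ.real (A ∩ B) - μ.real A * μ.real B| ≤ a)
    (hX : Measurable[m₁] X) (hX0 : ∀ ω, 0 ≤ X ω) (hXT : ∀ ω, X ω ≤ T)
    (hY : Measurable[m₂] Y) (hY0 : ∀ ω, 0 ≤ Y ω) (hYT : ∀ ω, Y ω ≤ T) :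
    |cov[X, Y; μ]| ≤ T ^ 2 * a := by
  have hXm := hX.mono hm₁ le_rfl
  have hYm := hY.mono hm₂ le_rfl
  rw [sq, mul_assoc]
  refine abs_covariance_le_of_indicator hXm hX0 hXT hT (memLp_of_nonneg_of_le 2 hYm hY0 hYT)
    fun s => ?_
  have hA : MeasurableSet[m₁] {ω | s ≤ X ω} := hX measurableSet_Ici
  rw [covariance_comm]
  refine abs_covariance_le_of_indicator hYm hY0 hYT hT
    (memLp_indicator_one 2 (hm₁ _ hA)) fun s' => ?_
  have hB : MeasurableSet[m₂] {ω | s' ≤ Y ω} := hY measurableSet_Ici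
  rw [covariance_comm, covariance_indicator_one (hm₁ _ hA) (hm₂ _ hB)]
  exact ha _ _ hA hB

end Covariance

section WeightedSums

variable {Ω : Type*} [MeasurableSpace Ω] {μ : Measure Ω} [IsProbabilityMeasure μ]

lemma sq_integral_abs_le {X : Ω → ℝ} (hX : MemLp X 2 μ) :
    (∫ ω, |X ω| ∂μ) ^ 2 ≤ ∫ ω, X ω ^ 2 ∂μ := by
  have hvar := variance_nonneg |X| μ
  rw [variance_eq_sub hX.abs] at hvar
  simpa using hvar

lemma sum_comp_natDist_le {β : ℕ → ℝ} (hβ0 : ∀ k, 0 ≤ β k) (hβ : Summable β)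
    (J : Finset ℕ) (i : ℕ) : ∑ j ∈ J, β (Nat.dist i j) ≤ 2 * ∑' k, β k := by
  have hinj (I : Finset ℕ) (hI : (I : Set ℕ).InjOn (Nat.dist i)) :
      ∑ j ∈ I, β (Nat.dist i j) ≤ ∑' k, β k := by
    rw [← Finset.sum_image (f := β) hI]
    exact hβ.sum_le_tsum _ fun k _ => hβ0 k
  rw [← Finset.sum_filter_add_sum_filter_not J (· ≤ i), two_mul]
  refine add_le_add (hinj _ fun x hx y hy hxy => ?_) (hinj _ fun x hx y hy hxy => ?_) <;>
  · simp only [Finset.coe_filter, mem_ofPred_eq, Nat.dist] at hx hy hxy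
    omega

lemma variance_sum_mul_le {J : Finset ℕ} {w : ℕ → ℝ} {X : ℕ → Ω → ℝ}
    (hX : ∀ j ∈ J, MemLp (X j) 2 μ) {β : ℕ → ℝ} (hβ0 : ∀ k, 0 ≤ β k) (hβ : Summable β)
    (hcov : ∀ i ∈ J, ∀ j ∈ J, i ≤ j → |cov[X i, X j; μ]| ≤ β (j - i)) {V W : ℝ} (hW0 : 0 ≤ W)
    (hW : ∀ j ∈ J, |w j| ≤ W) (hV : ∑ j ∈ J, |w j| ≤ V) :
    Var[fun ω => ∑ j ∈ J, w j * X j ω; μ] ≤ 2 * V * W * ∑' k, β k := by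
  have hcov' (i) (hi : i ∈ J) (j) (hj : j ∈ J) : |cov[X i, X j; μ]| ≤ β (Nat.dist i j) := by
    rcases le_total i j with hij | hij
    · rw [Nat.dist_eq_sub_of_le hij]; exact hcov i hi j hj hij
    · rw [Nat.dist_eq_sub_of_le_right hij, covariance_comm]; exact hcov j hj i hi hij
  rw [variance_fun_sum' fun j hj => (hX j hj).const_mul (w j)]
  simp_rw [covariance_const_mul_left, covariance_const_mul_right]
  calc ∑ i ∈ J, ∑ j ∈ J, w i * (w j * cov[X i, X j; μ])
      ≤ ∑ i ∈ J, ∑ j ∈ J, |w i| * (W * β (Nat.dist i j)) := by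
        refine Finset.sum_le_sum fun i hi => Finset.sum_le_sum fun j hj => ?_
        refine (le_abs_self _).trans ?_
        rw [abs_mul, abs_mul]
        gcongr
        exacts [hW j hj, hcov' i hi j hj]
    _ = ∑ i ∈ J, |w i| * (W * ∑ j ∈ J, β (Nat.dist i j)) := by simp_rw [Finset.mul_sum]
    _ ≤ ∑ i ∈ J, |w i| * (W * (2 * ∑' k, β k)) := by
        gcongr with i
        exact sum_comp_natDist_le hβ0 hβ J i
    _ ≤ V * (W * (2 * ∑' k, β k)) := by
        rw [← Finset.sum_mul]
        gcongr
        exact mul_nonneg hW0 (mul_nonneg zero_le_two (tsum_nonneg hβ0))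
    _ = 2 * V * W * ∑' k, β k := by ring

lemma integral_abs_sum_mul_sub_le {J : Finset ℕ} {w : ℕ → ℝ} {X : ℕ → Ω → ℝ}
    (hX : ∀ j ∈ J, MemLp (X j) 2 μ) {β : ℕ → ℝ} (hβ0 : ∀ k, 0 ≤ β k) (hβ : Summable β)
    (hcov : ∀ i ∈ J, ∀ j ∈ J, i ≤ j → |cov[X i, X j; μ]| ≤ β (j - i)) {V W : ℝ} (hW0 : 0 ≤ W)
    (hW : ∀ j ∈ J, |w j| ≤ W) (hV : ∑ j ∈ J, |w j| ≤ V) :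
    ∫ ω, |∑ j ∈ J, w j * (X j ω - μ[X j])| ∂μ ≤ √(2 * V * W * ∑' k, β k) := by
  have hS : MemLp (fun ω => ∑ j ∈ J, w j * X j ω) 2 μ :=
    memLp_finsetSum J fun j hj => (hX j hj).const_mul (w j)
  have hmean : μ[fun ω => ∑ j ∈ J, w j * X j ω] = ∑ j ∈ J, w j * μ[X j] := by
    rw [integral_finsetSum _ fun j hj => ((hX j hj).integrable one_le_two).const_mul (w j)]
    simp_rw [integral_const_mul]
  apply Real.le_sqrt_of_sq_le
  simp_rw [mul_sub, Finset.sum_sub_distrib, ← hmean]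
  refine (sq_integral_abs_le (hS.sub (memLp_const _))).trans ?_
  exact (variance_eq_integral hS.aemeasurable).symm.trans_le
    (variance_sum_mul_le hX hβ0 hβ hcov hW0 hW hV)

lemma integral_abs_sum_mul_sub_le_of_integral_le {J : Finset ℕ} {w : ℕ → ℝ} {X : ℕ → Ω → ℝ}
    (hX : ∀ j ∈ J, Integrable (X j) μ) (hX0 : ∀ j ω, 0 ≤ X j ω) {δ : ℝ} (hδ : 0 ≤ δ)
    (hXδ : ∀ j ∈ J, μ[X j] ≤ δ) {V : ℝ} (hV : ∑ j ∈ J, |w j| ≤ V) :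
    ∫ ω, |∑ j ∈ J, w j * (X j ω - μ[X j])| ∂μ ≤ 2 * V * δ := by
  have hmean (j : ℕ) : 0 ≤ μ[X j] := integral_nonneg (hX0 j)
  have hterm (j : ℕ) (ω : Ω) : |w j * (X j ω - μ[X j])| ≤ |w j| * (X j ω + μ[X j]) := by
    rw [abs_mul]
    gcongr
    rw [abs_le]
    constructor <;> linarith [hX0 j ω, hmean j]
  have hint (j) (hj : j ∈ J) : Integrable (fun ω => |w j| * (X j ω + μ[X j])) μ :=
    ((hX j hj).add (integrable_const _)).const_mul _
  calc ∫ ω, |∑ j ∈ J, w j * (X j ω - μ[X j])| ∂μ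
      ≤ ∫ ω, ∑ j ∈ J, |w j| * (X j ω + μ[X j]) ∂μ :=
        integral_mono_of_nonneg (ae_of_all _ fun _ => abs_nonneg _) (integrable_finsetSum _ hint)
          (ae_of_all _ fun ω => (Finset.abs_sum_le_sum_abs _ _).trans
            (Finset.sum_le_sum fun j _ => hterm j ω))
    _ = ∑ j ∈ J, |w j| * (2 * μ[X j]) := by
        rw [integral_finsetSum _ hint]
        refine Finset.sum_congr rfl fun j hj => ?_
        rw [integral_const_mul, integral_add (hX j hj) (integrable_const _), integral_const,
          probReal_univ, one_smul, two_mul]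
    _ ≤ ∑ j ∈ J, |w j| * (2 * δ) := by
        gcongr with j hj
        exact hXδ j hj
    _ ≤ 2 * V * δ := by
        rw [← Finset.sum_mul, mul_comm 2 V, mul_assoc]
        gcongr

lemma integral_abs_sum_mul_sub_le_of_truncation {J : Finset ℕ} {w : ℕ → ℝ} {X : ℕ → Ω → ℝ} {T : ℝ}
    (hX : ∀ j ∈ J, Integrable (X j) μ) (hXT : ∀ j ∈ J, MemLp (fun ω => min (X j ω) T) 2 μ)
    {δ : ℝ} (hδ : 0 ≤ δ) (htail : ∀ j ∈ J, ∫ ω, max (X j ω - T) 0 ∂μ ≤ δ)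
    {β : ℕ → ℝ} (hβ0 : ∀ k, 0 ≤ β k) (hβ : Summable β)
    (hcov : ∀ i ∈ J, ∀ j ∈ J, i ≤ j →
      |cov[fun ω => min (X i ω) T, fun ω => min (X j ω) T; μ]| ≤ β (j - i))
    {V W : ℝ} (hW0 : 0 ≤ W) (hW : ∀ j ∈ J, |w j| ≤ W) (hV : ∑ j ∈ J, |w j| ≤ V) :
    ∫ ω, |∑ j ∈ J, w j * (X j ω - μ[X j])| ∂μ ≤
      √(2 * V * W * ∑' k, β k) + 2 * V * δ := by
  set Y : ℕ → Ω → ℝ := fun j ω => min (X j ω) T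
  set Z : ℕ → Ω → ℝ := fun j ω => max (X j ω - T) 0
  have hXYZ (j : ℕ) (ω : Ω) : X j ω = Y j ω + Z j ω := by
    rcases le_total (X j ω) T with hle | hle <;> simp [Y, Z, hle]
  have hY (j) (hj : j ∈ J) : Integrable (Y j) μ := (hXT j hj).integrable one_le_two
  have hZ (j) (hj : j ∈ J) : Integrable (Z j) μ := ((hX j hj).sub (integrable_const T)).pos_part
  have hsplit (ω : Ω) : ∑ j ∈ J, w j * (X j ω - μ[X j]) =
      ∑ j ∈ J, w j * (Y j ω - μ[Y j]) + ∑ j ∈ J, w j * (Z j ω - μ[Z j]) := by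
    rw [← Finset.sum_add_distrib]
    refine Finset.sum_congr rfl fun j hj => ?_
    rw [funext (hXYZ j), integral_add (hY j hj) (hZ j hj)]
    ring
  have hcentered (A : ℕ → Ω → ℝ) (hA : ∀ j ∈ J, Integrable (A j) μ) :
      Integrable (fun ω => |∑ j ∈ J, w j * (A j ω - μ[A j])|) μ :=
    (integrable_finsetSum _ fun j hj => ((hA j hj).sub (integrable_const _)).const_mul _).abs
  calc ∫ ω, |∑ j ∈ J, w j * (X j ω - μ[X j])| ∂μ
      ≤ ∫ ω, (|∑ j ∈ J, w j * (Y j ω - μ[Y j])| + |∑ j ∈ J, w j * (Z j ω - μ[Z j])|) ∂μ :=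
        integral_mono (hcentered X hX) ((hcentered Y hY).add (hcentered Z hZ)) fun ω => by
          simpa only [hsplit ω] using abs_add_le _ _
    _ ≤ √(2 * V * W * ∑' k, β k) + 2 * V * δ := by
        rw [integral_add (hcentered Y hY) (hcentered Z hZ)]
        exact add_le_add (integral_abs_sum_mul_sub_le hXT hβ0 hβ hcov hW0 hW hV)
          (integral_abs_sum_mul_sub_le_of_integral_le hZ (fun _ _ => le_max_right _ _) hδ htail hV)

end WeightedSums

section UniformIntegrability

variable {Ω : Type*} [MeasurableSpace Ω] {μ : Measure Ω}

lemma le_rpow_neg_mul_rpow {C x q : ℝ} (hC : 0 < C) (hCx : C ≤ x) (hq : 1 ≤ q) :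
    x ≤ C ^ (-(q - 1)) * x ^ q := by
  have hx : 0 < x := hC.trans_le hCx
  calc x = x ^ (-(q - 1)) * x ^ q := by rw [← Real.rpow_add hx]; simp
    _ ≤ C ^ (-(q - 1)) * x ^ q := by
      have hpow := Real.rpow_le_rpow_of_nonpos hC hCx (neg_nonpos.2 (sub_nonneg.2 hq))
      gcongr

lemma uniformIntegrable_one_of_lintegral_rpow_le [IsFiniteMeasure μ] {ι : Type*} {f : ι → Ω → ℝ}
    (hf : ∀ i, AEStronglyMeasurable (f i) μ) {q M : ℝ} (hq : 1 < q)
    (hM : ∀ i, ∫⁻ ω, ENNReal.ofReal (|f i ω| ^ q) ∂μ ≤ ENNReal.ofReal M) :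
    UniformIntegrable f 1 μ := by
  refine uniformIntegrable_of le_rfl ENNReal.one_ne_top hf fun η hη => ?_
  have hlim : Tendsto (fun C : ℝ => C ^ (-(q - 1)) * M) atTop (nhds 0) := by
    simpa using (tendsto_rpow_neg_atTop (sub_pos.2 hq)).mul_const M
  obtain ⟨C, hC, hCη⟩ := ((eventually_gt_atTop 0).and (hlim.eventually (ge_mem_nhds hη))).exists
  refine ⟨⟨C, hC.le⟩, fun i => ?_⟩
  have htail (ω : Ω) : ‖{x | (⟨C, hC.le⟩ : NNReal) ≤ ‖f i x‖₊}.indicator (f i) ω‖ₑ ≤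
      ENNReal.ofReal (C ^ (-(q - 1))) * ENNReal.ofReal (|f i ω| ^ q) := by
    rw [← ENNReal.ofReal_mul (by positivity), Real.enorm_eq_ofReal_abs]
    refine ENNReal.ofReal_le_ofReal ?_
    by_cases hω : C ≤ |f i ω|
    · rw [indicator_of_mem (by exact hω)]
      exact le_rpow_neg_mul_rpow hC hω hq.le
    · rw [indicator_of_notMem (by exact hω), abs_zero]
      positivity
  calc eLpNorm _ 1 μ
      ≤ ∫⁻ ω, ENNReal.ofReal (C ^ (-(q - 1))) * ENNReal.ofReal (|f i ω| ^ q) ∂μ :=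
        eLpNorm_one_eq_lintegral_enorm.trans_le (lintegral_mono htail)
    _ ≤ ENNReal.ofReal (C ^ (-(q - 1)) * M) := by
        rw [lintegral_const_mul' _ _ ENNReal.ofReal_ne_top, ENNReal.ofReal_mul (by positivity)]
        gcongr
        exact hM i
    _ ≤ ENNReal.ofReal η := ENNReal.ofReal_le_ofReal hCη

lemma uniformIntegrable_sq_of_lintegral_rpow_le [IsFiniteMeasure μ] {ι : Type*} {f : ι → Ω → ℝ}
    (hf : ∀ i, AEStronglyMeasurable (f i) μ) {ν M : ℝ} (hν : 0 < ν)
    (hM : ∀ i, ∫⁻ ω, ENNReal.ofReal (|f i ω| ^ (2 + 2 * ν)) ∂μ ≤ ENNReal.ofReal M) :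
    UniformIntegrable (fun i ω => f i ω ^ 2) 1 μ := by
  have hpow (x : ℝ) : |x ^ 2| ^ (1 + ν) = |x| ^ (2 + 2 * ν) := by
    rw [abs_pow, ← Real.rpow_natCast_mul (abs_nonneg x)]
    norm_num [mul_add]
  refine uniformIntegrable_one_of_lintegral_rpow_le (M := M) (fun i => (hf i).pow 2)
    (lt_add_of_pos_right 1 hν) fun i => ?_
  simpa only [hpow] using hM i

lemma exists_forall_integral_max_sub_le {ι : Type*} {f : ι → Ω → ℝ}
    (hf : UniformIntegrable f 1 μ) {η : ℝ} (hη : 0 < η) :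
    ∃ T, 0 ≤ T ∧ ∀ i, ∫ ω, max (f i ω - T) 0 ∂μ ≤ η := by
  obtain ⟨T, hT⟩ := hf.spec one_ne_zero ENNReal.one_ne_top hη
  refine ⟨T, T.coe_nonneg, fun i => ?_⟩
  have hle (ω : Ω) : ENNReal.ofReal (max (f i ω - T) 0) ≤
      ‖{x | T ≤ ‖f i x‖₊}.indicator (f i) ω‖ₑ := by
    by_cases hω : T ≤ ‖f i ω‖₊
    · rw [indicator_of_mem (by exact hω), Real.enorm_eq_ofReal_abs]
      refine ENNReal.ofReal_le_ofReal (max_le ?_ (abs_nonneg _))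
      linarith [le_abs_self (f i ω), T.coe_nonneg]
    · have hlt : |f i ω| < T := not_le.1 hω
      rw [max_eq_right (by linarith [le_abs_self (f i ω)]), ENNReal.ofReal_zero]
      exact zero_le
  have hmeas : AEStronglyMeasurable (fun ω => max (f i ω - T) 0) μ :=
    ((hf.1 i).sub aestronglyMeasurable_const).sup aestronglyMeasurable_const
  have hnonneg : 0 ≤ᵐ[μ] fun ω => max (f i ω - T) 0 := ae_of_all _ fun _ => le_max_right _ _
  rw [integral_eq_lintegral_of_nonneg_ae hnonneg hmeas]
  exact ENNReal.toReal_le_of_le_ofReal hη.le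
    ((lintegral_mono hle).trans (eLpNorm_one_eq_lintegral_enorm.symm.trans_le (hT i)))

lemma integral_mul_abs_le [IsFiniteMeasure μ] {X D : Ω → ℝ} {C : ℝ} (T : ℝ)
    (hX : Integrable X μ) (hX0 : ∀ ω, 0 ≤ X ω) (hD : Integrable D μ) (hDC : ∀ ω, |D ω| ≤ C) :
    ∫ ω, X ω * |D ω| ∂μ ≤ T * ∫ ω, |D ω| ∂μ + C * ∫ ω, max (X ω - T) 0 ∂μ := by
  have hexcess : Integrable (fun ω => max (X ω - T) 0) μ := (hX.sub (integrable_const T)).pos_part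
  have hpoint (ω : Ω) : X ω * |D ω| ≤ T * |D ω| + C * max (X ω - T) 0 := by
    calc X ω * |D ω| ≤ (T + max (X ω - T) 0) * |D ω| := by
          gcongr
          linarith [le_max_left (X ω - T) 0]
      _ ≤ T * |D ω| + C * max (X ω - T) 0 := by
          rw [add_mul, mul_comm C]
          gcongr
          exact hDC ω
  rw [← integral_const_mul, ← integral_const_mul,
    ← integral_add (hD.abs.const_mul T) (hexcess.const_mul C)]
  exact integral_mono_of_nonneg (ae_of_all _ fun ω => mul_nonneg (hX0 ω) (abs_nonneg _))
    ((hD.abs.const_mul T).add (hexcess.const_mul C)) (ae_of_all _ hpoint)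

lemma tendsto_integral_mul_abs [IsFiniteMeasure μ] {X D : ℕ → Ω → ℝ} {C : ℝ} (hC : 0 ≤ C)
    (hX : ∀ᶠ n in atTop, Integrable (X n) μ) (hX0 : ∀ n ω, 0 ≤ X n ω)
    (htail : ∀ η > 0, ∃ T, ∀ᶠ n in atTop, ∫ ω, max (X n ω - T) 0 ∂μ ≤ η)
    (hD : ∀ n, Integrable (D n) μ) (hDC : ∀ᶠ n in atTop, ∀ ω, |D n ω| ≤ C)
    (hlim : Tendsto (fun n => ∫ ω, |D n ω| ∂μ) atTop (nhds 0)) :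
    Tendsto (fun n => ∫ ω, X n ω * |D n ω| ∂μ) atTop (nhds 0) := by
  refine tendsto_order.2 ⟨fun a ha => Eventually.of_forall fun n => ha.trans_le <|
    integral_nonneg fun ω => mul_nonneg (hX0 n ω) (abs_nonneg _), fun η hη => ?_⟩
  obtain ⟨T, hT⟩ := htail (η / (2 * (C + 1))) (by positivity)
  have hsmall : ∀ᶠ n in atTop, T * ∫ ω, |D n ω| ∂μ < η / 2 :=
    (hlim.const_mul T).eventually (gt_mem_nhds (by simpa using hη))
  filter_upwards [hX, hDC, hT, hsmall] with n hXn hDn hTn hsmalln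
  have hexcess : C * ∫ ω, max (X n ω - T) 0 ∂μ ≤ η / 2 := calc
    C * ∫ ω, max (X n ω - T) 0 ∂μ ≤ (C + 1) * (η / (2 * (C + 1))) := by
        gcongr
        linarith
    _ = η / 2 := by field_simp
  linarith [integral_mul_abs_le T hXn (hX0 n) (hD n) hDn]

end UniformIntegrability

section Mixing

variable {Ω : Type*} {ε : ℕ → ℕ → Ω → ℝ}

lemma measurable_eps_pastField {n t u : ℕ} (hu : u ≤ t) : Measurable[pastField ε n t] (ε n u) :=
  Measurable.of_comap_le (le_iSup₂_of_le u hu le_rfl)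

lemma measurable_eps_futureField {n t u : ℕ} (hu : t ≤ u) :
    Measurable[futureField ε n t] (ε n u) :=
  Measurable.of_comap_le (le_iSup₂_of_le u hu le_rfl)

variable [mΩ : MeasurableSpace Ω] {μ : Measure Ω}

lemma pastField_le (hε : ∀ n t, Measurable (ε n t)) (n t : ℕ) : pastField ε n t ≤ mΩ :=
  iSup₂_le fun u _ => (hε n u).comap_le

lemma futureField_le (hε : ∀ n t, Measurable (ε n t)) (n t : ℕ) : futureField ε n t ≤ mΩ :=
  iSup₂_le fun u _ => (hε n u).comap_le

lemma alphaMix_nonneg (h : ℕ) : 0 ≤ alphaMix μ ε h := by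
  refine Real.iSup_nonneg fun n => Real.iSup_nonneg fun t => Real.sSup_nonneg ?_
  rintro _ ⟨A, B, -, -, rfl⟩
  exact abs_nonneg _

/-- The mixing coefficient at lag `k` for variables that look back over `h` further innovations:
`α_ε(k - h)`, replaced by the trivial bound `1` while the two windows may overlap (`k < h`). -/
noncomputable def lagMix (μ : Measure Ω) (ε : ℕ → ℕ → Ω → ℝ) (h k : ℕ) : ℝ :=
  if k < h then 1 else alphaMix μ ε (k - h)

lemma lagMix_nonneg (h k : ℕ) : 0 ≤ lagMix μ ε h k := by
  unfold lagMix
  split_ifs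
  exacts [zero_le_one, alphaMix_nonneg _]

lemma summable_lagMix (hα : Summable (alphaMix μ ε)) (h : ℕ) : Summable (lagMix μ ε h) :=
  (summable_nat_add_iff h).1 <| hα.congr fun k => by simp [lagMix]

variable [IsProbabilityMeasure μ]

lemma abs_measureReal_inter_sub_mul_le_one (A B : Set Ω) :
    |μ.real (A ∩ B) - μ.real A * μ.real B| ≤ 1 := by
  have hprod : μ.real A * μ.real B ≤ 1 :=
    mul_le_one₀ measureReal_le_one measureReal_nonneg measureReal_le_one
  exact abs_sub_le_of_nonneg_of_le measureReal_nonneg measureReal_le_one (by positivity) hprod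

lemma alphaMix_le_one (h : ℕ) : alphaMix μ ε h ≤ 1 := by
  refine Real.iSup_le (fun n => Real.iSup_le (fun t => Real.sSup_le ?_ zero_le_one) zero_le_one)
    zero_le_one
  rintro _ ⟨A, B, -, -, rfl⟩
  exact abs_measureReal_inter_sub_mul_le_one A B

lemma summable_alphaMix_of_rpow {q : ℝ} (hq : q ≤ 1)
    (hα : Summable fun h => alphaMix μ ε h ^ q) : Summable (alphaMix μ ε) :=
  hα.of_nonneg_of_le alphaMix_nonneg fun h =>
    Real.self_le_rpow_of_le_one (alphaMix_nonneg h) (alphaMix_le_one h) hq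

lemma abs_measureReal_inter_sub_mul_le_alphaMix {n t h : ℕ} {A B : Set Ω}
    (hA : MeasurableSet[pastField ε n t] A) (hB : MeasurableSet[futureField ε n (t + h)] B) :
    |μ.real (A ∩ B) - μ.real A * μ.real B| ≤ alphaMix μ ε h := by
  set D : ℕ → ℕ → Set ℝ := fun n t => {x | ∃ A B : Set Ω, MeasurableSet[pastField ε n t] A ∧
    MeasurableSet[futureField ε n (t + h)] B ∧ x = |μ.real (A ∩ B) - μ.real A * μ.real B|}
  have hle : ∀ n t, ∀ x ∈ D n t, x ≤ 1 := by
    rintro n t _ ⟨A, B, -, -, rfl⟩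
    exact abs_measureReal_inter_sub_mul_le_one A B
  have hsSup (n t : ℕ) : sSup (D n t) ≤ 1 := Real.sSup_le (hle n t) zero_le_one
  have hiSup (n : ℕ) : ⨆ t, sSup (D n t) ≤ 1 := Real.iSup_le (hsSup n) zero_le_one
  calc |μ.real (A ∩ B) - μ.real A * μ.real B|
      ≤ sSup (D n t) := le_csSup ⟨1, hle n t⟩ ⟨A, B, hA, hB, rfl⟩
    _ ≤ ⨆ t, sSup (D n t) := le_ciSup ⟨1, forall_mem_range.2 (hsSup n)⟩ t
    _ ≤ alphaMix μ ε h := le_ciSup (f := fun n => ⨆ t, sSup (D n t))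
        ⟨1, forall_mem_range.2 hiSup⟩ n

lemma abs_covariance_le_lagMix (hε : ∀ n t, Measurable (ε n t)) {n h i j : ℕ} (hij : i ≤ j)
    {X Y : Ω → ℝ} {T : ℝ} (hT : 0 ≤ T)
    (hX : Measurable[pastField ε n i] X) (hX0 : ∀ ω, 0 ≤ X ω) (hXT : ∀ ω, X ω ≤ T)
    (hY : Measurable[futureField ε n (j - h)] Y) (hY0 : ∀ ω, 0 ≤ Y ω) (hYT : ∀ ω, Y ω ≤ T) :
    |cov[X, Y; μ]| ≤ T ^ 2 * lagMix μ ε h (j - i) := by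
  refine abs_covariance_le_of_mixing (pastField_le hε n i) (futureField_le hε n (j - h)) hT
    (fun A B hA hB => ?_) hX hX0 hXT hY hY0 hYT
  unfold lagMix
  split_ifs with hlt
  · exact abs_measureReal_inter_sub_mul_le_one A B
  · refine abs_measureReal_inter_sub_mul_le_alphaMix hA ?_
    rwa [show i + (j - i - h) = j - h by omega]

end Mixing

section ZeroReturnIndicator

variable {Ω : Type*} {v : ℝ → ℝ} {ε : ℕ → ℕ → Ω → ℝ}

lemma aproc_nonneg (n t : ℕ) (ω : Ω) : 0 ≤ aproc v ε n t ω := by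
  unfold aproc
  split_ifs <;> norm_num

lemma aproc_le_one (n t : ℕ) (ω : Ω) : aproc v ε n t ω ≤ 1 := by
  unfold aproc
  split_ifs <;> norm_num

lemma aproc_mul_self (n t : ℕ) (ω : Ω) : aproc v ε n t ω * aproc v ε n t ω = aproc v ε n t ω := by
  unfold aproc
  split_ifs <;> norm_num

lemma measurable_aproc {m : MeasurableSpace Ω} {n t : ℕ} (hε : Measurable[m] (ε n t)) :
    Measurable[m] (aproc v ε n t) :=
  Measurable.ite ((measurable_const.mul hε) (measurableSet_singleton 0)).compl measurable_const
    measurable_const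

lemma aproc_mul_eq_indicator (n s t : ℕ) : (fun ω => aproc v ε n s ω * aproc v ε n t ω) =
    {ω | aproc v ε n s ω * aproc v ε n t ω = 1}.indicator 1 := by
  ext ω
  unfold aproc indicator
  simp only [mem_ofPred_eq, Pi.one_apply]
  split_ifs <;> simp_all

variable [MeasurableSpace Ω] {μ : Measure Ω}

/-- The function `g` is the `g_h` of the model: `P(a_t a_{t-h} = 1) = g(t/n)` for `h < t ≤ n`.
The lag `h = 0` covers `P(a_t = 1)`. -/
def IsJointReturnProb (μ : Measure Ω) (v : ℝ → ℝ) (ε : ℕ → ℕ → Ω → ℝ) (h : ℕ) (g : ℝ → ℝ) :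
    Prop :=
  ∀ n t : ℕ, h < t → t ≤ n →
    μ.real {ω | aproc v ε n t ω * aproc v ε n (t - h) ω = 1} = g ((t : ℝ) / n)

lemma IsJointReturnProb.measureReal_aproc_eq {p : ℝ → ℝ} (hp : IsJointReturnProb μ v ε 0 p)
    {n t : ℕ} (ht : 0 < t) (htn : t ≤ n) : μ.real {ω | aproc v ε n t ω = 1} = p ((t : ℝ) / n) := by
  simpa only [Nat.sub_zero, aproc_mul_self] using hp n t ht htn

lemma IsJointReturnProb.div_mem_Icc [IsFiniteMeasure μ] {p q : ℝ → ℝ} {h n t : ℕ}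
    (hp : IsJointReturnProb μ v ε 0 p) (hq : IsJointReturnProb μ v ε h q)
    (ht : h < t) (htn : t ≤ n) : q ((t : ℝ) / n) / p ((t : ℝ) / n) ∈ Icc (0 : ℝ) 1 := by
  rw [← hq n t ht htn, ← hp.measureReal_aproc_eq (Nat.zero_lt_of_lt ht) htn]
  refine ⟨by positivity, div_le_one_of_le₀ (measureReal_mono fun ω hω => ?_) measureReal_nonneg⟩
  simp only [mem_ofPred_eq] at hω ⊢
  exact le_antisymm (aproc_le_one n t ω)
    (hω.ge.trans (mul_le_of_le_one_right (aproc_nonneg _ _ _) (aproc_le_one _ _ _)))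

lemma integral_aproc_mul {n s t : ℕ} (hs : Measurable (ε n s)) (ht : Measurable (ε n t)) :
    ∫ ω, aproc v ε n s ω * aproc v ε n t ω ∂μ =
      μ.real {ω | aproc v ε n s ω * aproc v ε n t ω = 1} := by
  rw [aproc_mul_eq_indicator]
  exact integral_indicator_one
    (((measurable_aproc hs).mul (measurable_aproc ht)) (measurableSet_singleton 1))

lemma integral_eps_sq_eq_measureReal {n t : ℕ} (hv : v ((t : ℝ) / n) ≠ 0)
    (hident : ∫ ω, ε n t ω ^ 2 ∂(μ[|{ω | aproc v ε n t ω = 1}]) = 1) :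
    ∫ ω, ε n t ω ^ 2 ∂μ = μ.real {ω | aproc v ε n t ω = 1} := by
  have hzero : ∀ ω, ω ∉ {ω | aproc v ε n t ω = 1} → ε n t ω ^ 2 = 0 := by
    intro ω hω
    by_contra hne
    refine hω (if_pos ?_)
    exact mul_ne_zero hv (pow_ne_zero_iff two_ne_zero |>.1 hne)
  rw [ProbabilityTheory.cond, integral_smul_measure,
    setIntegral_eq_integral_of_forall_compl_eq_zero hzero, smul_eq_mul,
    ENNReal.toReal_inv] at hident
  exact ((inv_mul_eq_one₀ (inv_eq_zero.not.1 (left_ne_zero_of_mul_eq_one hident))).1 hident).symm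

end ZeroReturnIndicator

section KernelWeights

/-- The properties of a smoothing kernel that the estimators use: it is nonnegative, bounded by
`R` and of bounded support, and it is continuous and positive at some point. -/
structure IsSmoothingKernel (K : ℝ → ℝ) (R : ℝ) : Prop where
  nonneg : ∀ z, 0 ≤ K z
  le_bound : ∀ z, K z ≤ R
  exists_forall_eq_zero : ∃ L, ∀ z, L < |z| → K z = 0
  exists_continuousAt_pos : ∃ z, ContinuousAt K z ∧ 0 < K z

/-- A bandwidth sequence: the smoothing windows shrink, while the number `n b_n` of observations
that they contain diverges. -/
structure IsBandwidth (b : ℕ → ℝ) : Prop where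
  pos : ∀ n, 0 < b n
  tendsto_zero : Tendsto b atTop (nhds 0)
  tendsto_nat_mul : Tendsto (fun n : ℕ => (n : ℝ) * b n) atTop atTop

variable {K : ℝ → ℝ} {R : ℝ} {b : ℕ → ℝ}

lemma isSmoothingKernel_of_continuous (hK : Continuous K) (hK_supp : HasCompactSupport K)
    (hK0 : ∀ z, 0 ≤ K z) (hKR : ∀ z, K z ≤ R) (hK_int : ∫ z, K z ≠ 0) :
    IsSmoothingKernel K R where
  nonneg := hK0
  le_bound := hKR
  exists_forall_eq_zero := by
    obtain ⟨L, hL⟩ := hK_supp.isCompact.isBounded.exists_norm_le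
    exact ⟨L, fun z hz => of_not_not fun hne => (hL z (subset_tsupport K hne)).not_gt hz⟩
  exists_continuousAt_pos := by
    obtain ⟨z, hz⟩ : ∃ z, K z ≠ 0 := by
      by_contra! hzero
      simp [hzero] at hK_int
    exact ⟨z, hK.continuousAt, (hK0 z).lt_of_ne' hz⟩

lemma isBandwidth_of_tendsto (hb_pos : ∀ n, 0 < b n) (hb : Tendsto b atTop (nhds 0))
    (hnb : Tendsto (fun n : ℕ => 1 / ((n : ℝ) * b n ^ 2)) atTop (nhds 0)) : IsBandwidth b where
  pos := hb_pos
  tendsto_zero := hb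
  tendsto_nat_mul := by
    have hinv : Tendsto (fun n : ℕ => ((n : ℝ) * b n)⁻¹) atTop (nhds 0) := by
      refine (mul_zero (0 : ℝ) ▸ hnb.mul hb).congr fun n => ?_
      rw [one_div, sq, ← mul_assoc, mul_inv, mul_assoc, inv_mul_cancel₀ (hb_pos n).ne', mul_one]
    refine (tendsto_inv_nhdsGT_zero.comp (tendsto_nhdsWithin_iff.2 ⟨hinv, ?_⟩)).congr
      fun n => inv_inv _
    filter_upwards [eventually_gt_atTop 0] with n hn
    exact inv_pos.2 (mul_pos (Nat.cast_pos.2 hn) (hb_pos n))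

lemma Kw_nonneg (hK : IsSmoothingKernel K R) (n t i : ℕ) : 0 ≤ Kw K b n t i := by
  unfold Kw
  split_ifs
  exacts [le_rfl, hK.nonneg _]

lemma Kw_le (hK : IsSmoothingKernel K R) (n t i : ℕ) : Kw K b n t i ≤ R := by
  unfold Kw
  split_ifs
  exacts [(hK.nonneg 0).trans (hK.le_bound 0), hK.le_bound _]

lemma wgt_nonneg (hK : IsSmoothingKernel K R) (n t i : ℕ) : 0 ≤ wgt K b n t i :=
  div_nonneg (Kw_nonneg hK n t i) (Finset.sum_nonneg fun _ _ => Kw_nonneg hK n t _)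

lemma sum_wgt (n t : ℕ) : ∑ j ∈ Finset.Icc 1 n, wgt K b n t j =
    (∑ i ∈ Finset.Icc 1 n, Kw K b n t i) / ∑ i ∈ Finset.Icc 1 n, Kw K b n t i :=
  (Finset.sum_div _ _ _).symm

lemma sum_wgt_le_one (hK : IsSmoothingKernel K R) (n h t : ℕ) :
    ∑ j ∈ Finset.Icc (h + 1) n, wgt K b n t j ≤ 1 :=
  calc ∑ j ∈ Finset.Icc (h + 1) n, wgt K b n t j
      ≤ ∑ j ∈ Finset.Icc 1 n, wgt K b n t j :=
        Finset.sum_le_sum_of_subset_of_nonneg (Finset.Icc_subset_Icc_left (by omega))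
          fun j _ _ => wgt_nonneg hK n t j
    _ ≤ 1 := (sum_wgt n t).trans_le (div_self_le_one _)

lemma exists_forall_mem_Icc_le (hK : IsSmoothingKernel K R) :
    ∃ κ x y, 0 < κ ∧ x < y ∧ ∀ z ∈ Icc x y, κ ≤ K z := by
  obtain ⟨z₀, hcont, hpos⟩ := hK.exists_continuousAt_pos
  obtain ⟨δ, hδ, hball⟩ := Metric.eventually_nhds_iff_ball.1
    (hcont.eventually (lt_mem_nhds (half_lt_self hpos)))
  refine ⟨K z₀ / 2, z₀ - δ / 2, z₀ + δ / 2, half_pos hpos, by linarith, fun z hz => ?_⟩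
  refine (hball z ?_).le
  rw [Real.ball_eq_Ioo]
  constructor <;> linarith [hz.1, hz.2]

lemma sub_sub_two_le_card_erase_Icc_ceil_floor {x y : ℝ} (hx : 0 ≤ x) (t : ℕ) :
    y - x - 2 ≤ ((Finset.Icc ⌈x⌉₊ ⌊y⌋₊).erase t).card := by
  have hcard : ⌊y⌋₊ ≤ ((Finset.Icc ⌈x⌉₊ ⌊y⌋₊).erase t).card + ⌈x⌉₊ := by
    have hpred := Finset.pred_card_le_card_erase (a := t) (s := Finset.Icc ⌈x⌉₊ ⌊y⌋₊)
    rw [Nat.card_Icc] at hpred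
    omega
  have hcard' : (⌊y⌋₊ : ℝ) ≤ ((Finset.Icc ⌈x⌉₊ ⌊y⌋₊).erase t).card + ⌈x⌉₊ := mod_cast hcard
  linarith [Nat.ceil_lt_add_one hx, Nat.lt_floor_add_one y]

lemma mul_le_sum_Kw (hK : IsSmoothingKernel K R) {κ x y : ℝ} (hκ : 0 ≤ κ)
    (hκK : ∀ z ∈ Icc x y, κ ≤ K z) {n t : ℕ} (hnb : 0 < n * b n)
    (hlo : 0 < t - y * (n * b n)) (hhi : t - x * (n * b n) ≤ n) :
    κ * ((y - x) * (n * b n) - 2) ≤ ∑ i ∈ Finset.Icc 1 n, Kw K b n t i := by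
  set B : ℝ := n * b n
  set S := (Finset.Icc ⌈t - y * B⌉₊ ⌊t - x * B⌋₊).erase t
  have hS : S ⊆ Finset.Icc 1 n := (Finset.erase_subset _ _).trans <|
    Finset.Icc_subset_Icc (Nat.ceil_pos.2 hlo) (Nat.floor_le_of_le hhi)
  have hKw : ∀ i ∈ S, κ ≤ Kw K b n t i := by
    intro i hi
    obtain ⟨hit, hi⟩ := Finset.mem_erase.1 hi
    obtain ⟨hle, hge⟩ := Finset.mem_Icc.1 hi
    have hge0 : i = 0 ∨ (i : ℝ) ≤ t - x * B := (Nat.eq_zero_or_pos i).imp_right fun hpos =>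
      (Nat.le_floor_iff' hpos.ne').1 hge
    have hlei : t - y * B ≤ i := Nat.ceil_le.1 hle
    rw [Kw, if_neg (Ne.symm hit)]
    refine hκK _ ⟨(le_div_iff₀ hnb).2 ?_, (div_le_iff₀ hnb).2 (by linarith)⟩
    rcases hge0 with rfl | hge0
    · simp only [Nat.cast_zero] at hlei; linarith
    · linarith
  calc κ * ((y - x) * B - 2) ≤ κ * S.card := by
        gcongr
        linarith [sub_sub_two_le_card_erase_Icc_ceil_floor (y := t - x * B) hlo.le t]
    _ = ∑ _i ∈ S, κ := by rw [Finset.sum_const, nsmul_eq_mul, mul_comm]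
    _ ≤ ∑ i ∈ S, Kw K b n t i := Finset.sum_le_sum hKw
    _ ≤ ∑ i ∈ Finset.Icc 1 n, Kw K b n t i :=
        Finset.sum_le_sum_of_subset_of_nonneg hS fun i _ _ => Kw_nonneg hK n t i

lemma exists_eventually_le_sum_Kw (hK : IsSmoothingKernel K R) (hb : IsBandwidth b) {t : ℕ → ℕ}
    {s : ℝ} (hs : s ∈ Ioo (0 : ℝ) 1)
    (ht : Tendsto (fun n => (t n : ℝ) / n) atTop (nhds s)) :
    ∃ C, 0 < C ∧ ∀ᶠ n : ℕ in atTop, C * (n * b n) ≤ ∑ i ∈ Finset.Icc 1 n, Kw K b n (t n) i := by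
  obtain ⟨κ, x, y, hκ, hxy, hκK⟩ := exists_forall_mem_Icc_le hK
  have hyx : 0 < y - x := sub_pos.2 hxy
  have hshift (z : ℝ) : Tendsto (fun n => (t n : ℝ) / n - z * b n) atTop (nhds s) := by
    simpa using ht.sub (hb.tendsto_zero.const_mul z)
  have hscale {n : ℕ} (hn : 0 < n) (z : ℝ) :
      (n : ℝ) * (t n / n - z * b n) = t n - z * (n * b n) := by
    field_simp
  refine ⟨κ * (y - x) / 2, by positivity, ?_⟩
  filter_upwards [(hshift y).eventually (lt_mem_nhds hs.1),
    (hshift x).eventually (gt_mem_nhds hs.2), eventually_gt_atTop 0,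
    hb.tendsto_nat_mul.eventually_ge_atTop (4 / (y - x))] with n hlo hhi hn hlarge
  have hn' : (0 : ℝ) < n := Nat.cast_pos.2 hn
  calc κ * (y - x) / 2 * (n * b n) ≤ κ * ((y - x) * (n * b n) - 2) := by
        rw [div_le_iff₀' hyx] at hlarge
        rw [mul_div_assoc, mul_assoc]
        gcongr
        linarith
    _ ≤ _ := by
        refine mul_le_sum_Kw hK hκ.le hκK (mul_pos hn' (hb.pos n)) ?_ ?_
        · rw [← hscale hn]
          positivity
        · rw [← hscale hn]
          exact mul_le_of_le_one_right hn'.le hhi.le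

lemma exists_eventually_wgt_le (hK : IsSmoothingKernel K R) (hb : IsBandwidth b) {t : ℕ → ℕ}
    {s : ℝ} (hs : s ∈ Ioo (0 : ℝ) 1)
    (ht : Tendsto (fun n => (t n : ℝ) / n) atTop (nhds s)) :
    ∃ C, 0 ≤ C ∧ ∀ᶠ n : ℕ in atTop, ∀ j, wgt K b n (t n) j ≤ C * (n * b n)⁻¹ := by
  obtain ⟨C, hC, hsum⟩ := exists_eventually_le_sum_Kw hK hb hs ht
  have hR : 0 ≤ R := (hK.nonneg 0).trans (hK.le_bound 0)
  refine ⟨R / C, by positivity, ?_⟩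
  filter_upwards [hsum, hb.tendsto_nat_mul.eventually_gt_atTop 0] with n hn hnb j
  calc wgt K b n (t n) j ≤ R / (C * (n * b n)) :=
        div_le_div₀ hR (Kw_le hK n (t n) j) (mul_pos hC hnb) hn
    _ = R / C * (n * b n)⁻¹ := by rw [← div_div, div_eq_mul_inv (R / C)]

lemma eventually_sum_wgt_eq_one (hK : IsSmoothingKernel K R) (hb : IsBandwidth b) {t : ℕ → ℕ}
    {s : ℝ} (hs : s ∈ Ioo (0 : ℝ) 1)
    (ht : Tendsto (fun n => (t n : ℝ) / n) atTop (nhds s)) :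
    ∀ᶠ n : ℕ in atTop, ∑ j ∈ Finset.Icc 1 n, wgt K b n (t n) j = 1 := by
  obtain ⟨C, hC, hsum⟩ := exists_eventually_le_sum_Kw hK hb hs ht
  filter_upwards [hsum, hb.tendsto_nat_mul.eventually_gt_atTop 0] with n hn hnb
  rw [sum_wgt, div_self ((mul_pos hC hnb).trans_le hn).ne']

lemma eventually_wgt_eq_zero (hK : IsSmoothingKernel K R) (hb : IsBandwidth b) {t : ℕ → ℕ}
    {s : ℝ} (ht : Tendsto (fun n => (t n : ℝ) / n) atTop (nhds s)) {δ : ℝ} (hδ : 0 < δ) :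
    ∀ᶠ n : ℕ in atTop, ∀ j : ℕ, δ ≤ |(j : ℝ) / n - s| → wgt K b n (t n) j = 0 := by
  obtain ⟨L, hL⟩ := hK.exists_forall_eq_zero
  have hLb : Tendsto (fun n => L * b n) atTop (nhds 0) := by
    simpa using hb.tendsto_zero.const_mul L
  filter_upwards [ht.eventually (Metric.ball_mem_nhds s (half_pos hδ)),
    hLb.eventually (gt_mem_nhds (half_pos hδ)), eventually_gt_atTop 0] with n htn hLn hn j hj
  rw [Real.dist_eq] at htn
  have hfar : L * b n < |(t n : ℝ) / n - j / n| := by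
    linarith [abs_sub_le ((j : ℝ) / n) (t n / n) s, abs_sub_comm ((j : ℝ) / n) (t n / n)]
  have hKw : Kw K b n (t n) j = 0 := by
    unfold Kw
    split_ifs
    · rfl
    refine hL _ ?_
    rwa [← div_div, sub_div, abs_div, abs_of_pos (hb.pos n), lt_div_iff₀ (hb.pos n)]
  rw [wgt, hKw, zero_div]

lemma eventually_sum_wgt_Icc_succ (hK : IsSmoothingKernel K R) (hb : IsBandwidth b) {t : ℕ → ℕ}
    {s : ℝ} (hs : s ∈ Ioo (0 : ℝ) 1)
    (ht : Tendsto (fun n => (t n : ℝ) / n) atTop (nhds s)) (h : ℕ) :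
    ∀ᶠ n : ℕ in atTop, ∑ j ∈ Finset.Icc (h + 1) n, wgt K b n (t n) j = 1 := by
  filter_upwards [eventually_sum_wgt_eq_one hK hb hs ht,
    eventually_wgt_eq_zero hK hb ht (half_pos hs.1),
    (tendsto_const_div_atTop_nhds_zero_nat (h : ℝ)).eventually (gt_mem_nhds (half_pos hs.1))]
    with n hone hzero hh
  refine (Finset.sum_subset (Finset.Icc_subset_Icc_left (by omega)) fun j hj hj' => ?_).trans hone
  have hjh : j ≤ h := by
    simp only [Finset.mem_Icc] at hj hj'
    omega
  have hjn : (j : ℝ) / n ≤ h / n := by gcongr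
  refine hzero j ?_
  rw [abs_sub_comm]
  exact le_trans (by linarith) (le_abs_self _)

lemma abs_sum_mul_sub_le_of_local {ι : Type*} {J : Finset ι} {w x : ι → ℝ} {a η : ℝ}
    (hw0 : ∀ j ∈ J, 0 ≤ w j) (hw1 : ∑ j ∈ J, w j = 1)
    (hx : ∀ j ∈ J, w j ≠ 0 → |x j - a| ≤ η) : |∑ j ∈ J, w j * x j - a| ≤ η := by
  have hterm : ∀ j ∈ J, |w j * (x j - a)| ≤ w j * η := fun j hj => by
    rw [abs_mul, abs_of_nonneg (hw0 j hj)]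
    by_cases hwj : w j = 0
    · simp [hwj]
    · exact mul_le_mul_of_nonneg_left (hx j hj hwj) (hw0 j hj)
  calc |∑ j ∈ J, w j * x j - a| = |∑ j ∈ J, w j * (x j - a)| := by
        simp_rw [mul_sub, Finset.sum_sub_distrib, ← Finset.sum_mul, hw1, one_mul]
    _ ≤ ∑ j ∈ J, w j * η := (Finset.abs_sum_le_sum_abs _ _).trans (Finset.sum_le_sum hterm)
    _ = η := by rw [← Finset.sum_mul, hw1, one_mul]

lemma tendsto_sum_wgt_mul (hK : IsSmoothingKernel K R) (hb : IsBandwidth b) {t : ℕ → ℕ}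
    {s : ℝ} (hs : s ∈ Ioo (0 : ℝ) 1)
    (ht : Tendsto (fun n => (t n : ℝ) / n) atTop (nhds s)) {f : ℝ → ℝ}
    (hf : ContinuousAt f s) (h : ℕ) :
    Tendsto (fun n : ℕ => ∑ j ∈ Finset.Icc (h + 1) n, wgt K b n (t n) j * f ((j : ℝ) / n)) atTop
      (nhds (f s)) := by
  refine Metric.nhds_basis_closedBall.tendsto_right_iff.2 fun η hη => ?_
  obtain ⟨δ, hδ, hball⟩ := Metric.eventually_nhds_iff_ball.1
    (hf.eventually (Metric.closedBall_mem_nhds (f s) hη))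
  filter_upwards [eventually_sum_wgt_Icc_succ hK hb hs ht h, eventually_wgt_eq_zero hK hb ht hδ]
    with n hone hzero
  refine abs_sum_mul_sub_le_of_local (fun j _ => wgt_nonneg hK n (t n) j) hone fun j _ hj => ?_
  exact hball _ (not_le.1 fun hfar => hj (hzero j hfar))

end KernelWeights

section KernelEstimators

lemma abs_div_sub_div_le {P Q p q c : ℝ} (hc : 0 < c) (hp : c ≤ p) (hQ : 0 ≤ Q) (hQP : Q ≤ P) :
    |Q / P - q / p| ≤ c⁻¹ * (|P - p| + |Q - q|) := by
  have hp0 : 0 < p := hc.trans_le hp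
  have hP : 0 ≤ P := hQ.trans hQP
  have hratio : |Q / P| ≤ 1 := by
    rw [abs_of_nonneg (div_nonneg hQ hP)]
    exact div_le_one_of_le₀ hQP hP
  have hcancel : Q / P * P = Q := div_mul_cancel_of_imp fun h => le_antisymm (h ▸ hQP) hQ
  have hsplit : Q / P - q / p = p⁻¹ * (Q / P * (p - P) + (Q - q)) := by
    rw [mul_sub (Q / P), hcancel]
    field_simp
    ring
  calc |Q / P - q / p| ≤ p⁻¹ * (|Q / P| * |P - p| + |Q - q|) := by
        rw [hsplit, abs_mul, abs_of_pos (inv_pos.2 hp0), abs_sub_comm P, ← abs_mul]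
        gcongr
        exact abs_add_le _ _
    _ ≤ c⁻¹ * (|P - p| + |Q - q|) := by
        gcongr
        exact mul_le_of_le_one_left (abs_nonneg _) hratio

variable {Ω : Type*} {v : ℝ → ℝ} {ε : ℕ → ℕ → Ω → ℝ} {K : ℝ → ℝ} {R : ℝ} {b : ℕ → ℝ}

lemma phat2_zero (n t : ℕ) : phat2 v ε K b n 0 t = phat v ε K b n t := by
  ext ω
  simp only [phat, phat2, zero_add, Nat.sub_zero, aproc_mul_self]

lemma phat2_nonneg (hK : IsSmoothingKernel K R) (n h t : ℕ) (ω : Ω) :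
    0 ≤ phat2 v ε K b n h t ω :=
  Finset.sum_nonneg fun _ _ =>
    mul_nonneg (wgt_nonneg hK _ _ _) (mul_nonneg (aproc_nonneg _ _ _) (aproc_nonneg _ _ _))

lemma phat2_le_phat (hK : IsSmoothingKernel K R) (n h t : ℕ) (ω : Ω) :
    phat2 v ε K b n h t ω ≤ phat v ε K b n t ω :=
  calc phat2 v ε K b n h t ω
      ≤ ∑ j ∈ Finset.Icc (h + 1) n, wgt K b n t j * aproc v ε n j ω :=
        Finset.sum_le_sum fun j _ => mul_le_mul_of_nonneg_left
          (mul_le_of_le_one_right (aproc_nonneg _ _ _) (aproc_le_one _ _ _)) (wgt_nonneg hK _ _ _)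
    _ ≤ phat v ε K b n t ω :=
        Finset.sum_le_sum_of_subset_of_nonneg (Finset.Icc_subset_Icc_left (by omega))
          fun j _ _ => mul_nonneg (wgt_nonneg hK _ _ _) (aproc_nonneg _ _ _)

lemma phat_le_one (hK : IsSmoothingKernel K R) (n t : ℕ) (ω : Ω) : phat v ε K b n t ω ≤ 1 :=
  (Finset.sum_le_sum fun _ _ => mul_le_of_le_one_right (wgt_nonneg hK _ _ _)
    (aproc_le_one _ _ _)).trans (sum_wgt_le_one hK n 0 t)

lemma phat2_div_phat_mem_Icc (hK : IsSmoothingKernel K R) (n h t : ℕ) (ω : Ω) :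
    phat2 v ε K b n h t ω / phat v ε K b n t ω ∈ Icc 0 1 :=
  have hnonneg := phat2_nonneg hK n h t ω
  have hle := phat2_le_phat hK n h t ω
  ⟨div_nonneg hnonneg (hnonneg.trans hle), div_le_one_of_le₀ hle (hnonneg.trans hle)⟩

lemma abs_phat2_div_phat_sub_le_one (hK : IsSmoothingKernel K R) {x : ℝ} (hx : x ∈ Icc (0 : ℝ) 1)
    (n h t : ℕ) (ω : Ω) : |phat2 v ε K b n h t ω / phat v ε K b n t ω - x| ≤ 1 := by
  have hratio := phat2_div_phat_mem_Icc (v := v) (ε := ε) (b := b) hK n h t ω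
  exact abs_sub_le_of_nonneg_of_le hratio.1 hratio.2 hx.1 hx.2

variable [MeasurableSpace Ω] {μ : Measure Ω}

lemma measurable_phat2 (hε : ∀ n t, Measurable (ε n t)) (n h t : ℕ) :
    Measurable (phat2 v ε K b n h t) :=
  Finset.measurable_fun_sum _ fun j _ =>
    ((measurable_aproc (hε n j)).mul (measurable_aproc (hε n (j - h)))).const_mul _

lemma measurable_phat (hε : ∀ n t, Measurable (ε n t)) (n t : ℕ) :
    Measurable (phat v ε K b n t) :=
  phat2_zero (v := v) (ε := ε) n t ▸ measurable_phat2 hε n 0 t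

variable [IsProbabilityMeasure μ]

lemma integrable_phat2 (hK : IsSmoothingKernel K R) (hε : ∀ n t, Measurable (ε n t))
    (n h t : ℕ) : Integrable (phat2 v ε K b n h t) μ :=
  (memLp_of_nonneg_of_le 1 (measurable_phat2 hε n h t) (phat2_nonneg hK n h t) fun ω =>
    (phat2_le_phat hK n h t ω).trans (phat_le_one hK n t ω)).integrable le_rfl

lemma integral_abs_phat2_sub_le (hK : IsSmoothingKernel K R) (hε : ∀ n t, Measurable (ε n t))
    (hα : Summable (alphaMix μ ε)) {n h t : ℕ} {W : ℝ} (hW0 : 0 ≤ W)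
    (hW : ∀ j, wgt K b n t j ≤ W) :
    ∫ ω, |phat2 v ε K b n h t ω - ∑ j ∈ Finset.Icc (h + 1) n, wgt K b n t j *
      μ.real {ω | aproc v ε n j ω * aproc v ε n (j - h) ω = 1}| ∂μ ≤
      √(2 * 1 * W * ∑' k, lagMix μ ε h k) := by
  set X : ℕ → Ω → ℝ := fun j ω => aproc v ε n j ω * aproc v ε n (j - h) ω
  have hX0 (j : ℕ) (ω : Ω) : 0 ≤ X j ω := mul_nonneg (aproc_nonneg _ _ _) (aproc_nonneg _ _ _)
  have hX1 (j : ℕ) (ω : Ω) : X j ω ≤ 1 :=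
    mul_le_one₀ (aproc_le_one _ _ _) (aproc_nonneg _ _ _) (aproc_le_one _ _ _)
  have hXm {m : MeasurableSpace Ω} {j : ℕ} (hj : Measurable[m] (ε n j))
      (hjh : Measurable[m] (ε n (j - h))) : Measurable[m] (X j) :=
    (measurable_aproc hj).mul (measurable_aproc hjh)
  have habs (j : ℕ) : |wgt K b n t j| = wgt K b n t j := abs_of_nonneg (wgt_nonneg hK n t j)
  simp_rw [← integral_aproc_mul (hε n _) (hε n (_ - h)), phat2, ← Finset.sum_sub_distrib,
    ← mul_sub]
  refine integral_abs_sum_mul_sub_le (X := X)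
    (fun j _ => memLp_of_nonneg_of_le 2 (hXm (hε _ _) (hε _ _)) (hX0 j) (hX1 j))
    (lagMix_nonneg h) (summable_lagMix hα h) (fun i _ j _ hij => ?_) hW0
    (fun j _ => (habs j).trans_le (hW j)) ?_
  · simpa using abs_covariance_le_lagMix hε hij zero_le_one
      (hXm (measurable_eps_pastField le_rfl) (measurable_eps_pastField (Nat.sub_le i h)))
      (hX0 i) (hX1 i)
      (hXm (measurable_eps_futureField (Nat.sub_le j h)) (measurable_eps_futureField le_rfl))
      (hX0 j) (hX1 j)
  · simp_rw [habs]
    exact sum_wgt_le_one hK n h t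

lemma integral_abs_sub_const_le {X : Ω → ℝ} (hX : Integrable X μ) (a b : ℝ) :
    ∫ ω, |X ω - b| ∂μ ≤ ∫ ω, |X ω - a| ∂μ + |a - b| := by
  have hXa : Integrable (fun ω => |X ω - a|) μ := (hX.sub (integrable_const a)).abs
  calc ∫ ω, |X ω - b| ∂μ ≤ ∫ ω, (|X ω - a| + |a - b|) ∂μ :=
        integral_mono (hX.sub (integrable_const b)).abs (hXa.add (integrable_const _))
          fun ω => abs_sub_le _ _ _
    _ = ∫ ω, |X ω - a| ∂μ + |a - b| := by
        rw [integral_add hXa (integrable_const _), integral_const, probReal_univ, one_smul]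

lemma tendsto_integral_abs_phat2_sub (hK : IsSmoothingKernel K R) (hb : IsBandwidth b)
    (hε : ∀ n t, Measurable (ε n t)) (hα : Summable (alphaMix μ ε)) {h : ℕ} {f : ℝ → ℝ}
    (hprob : IsJointReturnProb μ v ε h f)
    {t : ℕ → ℕ} {s : ℝ} (hs : s ∈ Ioo (0 : ℝ) 1)
    (ht : Tendsto (fun n => (t n : ℝ) / n) atTop (nhds s)) (hf : ContinuousAt f s) :
    Tendsto (fun n => ∫ ω, |phat2 v ε K b n h (t n) ω - f ((t n : ℝ) / n)| ∂μ) atTop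
      (nhds 0) := by
  obtain ⟨C, hC, hwgt⟩ := exists_eventually_wgt_le hK hb hs ht
  have hvar : Tendsto (fun n : ℕ => √(2 * 1 * (C * (n * b n)⁻¹) * ∑' k, lagMix μ ε h k)) atTop
      (nhds 0) := by
    have := (((hb.tendsto_nat_mul.inv_tendsto_atTop.const_mul C).const_mul (2 * 1)).mul_const
      (∑' k, lagMix μ ε h k)).sqrt
    simpa only [mul_zero, zero_mul, Real.sqrt_zero, Pi.inv_apply] using this
  have hbias := (tendsto_sum_wgt_mul hK hb hs ht hf h).sub (hf.tendsto.comp ht)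
  have hbound := hvar.add hbias.abs
  rw [sub_self, abs_zero, add_zero] at hbound
  refine squeeze_zero' (Eventually.of_forall fun n => integral_nonneg fun ω => abs_nonneg _) ?_
    hbound
  filter_upwards [hwgt, hb.tendsto_nat_mul.eventually_ge_atTop 0] with n hn hnb
  have hmean : ∑ j ∈ Finset.Icc (h + 1) n, wgt K b n (t n) j * f ((j : ℝ) / n) =
      ∑ j ∈ Finset.Icc (h + 1) n, wgt K b n (t n) j *
        μ.real {ω | aproc v ε n j ω * aproc v ε n (j - h) ω = 1} :=
    Finset.sum_congr rfl fun j hj => by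
      rw [hprob n j (Finset.mem_Icc.1 hj).1 (Finset.mem_Icc.1 hj).2]
  refine (integral_abs_sub_const_le (integrable_phat2 hK hε n h (t n))
    (∑ j ∈ Finset.Icc (h + 1) n, wgt K b n (t n) j * f ((j : ℝ) / n)) _).trans ?_
  gcongr ?_ + _
  rw [hmean]
  exact integral_abs_phat2_sub_le hK hε hα (by positivity) hn

end KernelEstimators

section RatioEstimator

variable {Ω : Type*} [MeasurableSpace Ω] {μ : Measure Ω} [IsProbabilityMeasure μ]
  {v p q : ℝ → ℝ} {ε : ℕ → ℕ → Ω → ℝ} {K : ℝ → ℝ} {R : ℝ} {b : ℕ → ℝ} {h : ℕ}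

/-- The index set of a triangular array, whose `n`-th row consists of the entries `1 ≤ t ≤ n`. -/
abbrev TriangularIndex := {i : ℕ × ℕ // 1 ≤ i.2 ∧ i.2 ≤ i.1}

lemma eventually_lt_and_le_of_tendsto_div {t : ℕ → ℕ} {s : ℝ} (hs : s ∈ Ioo (0 : ℝ) 1)
    (ht : Tendsto (fun n => (t n : ℝ) / n) atTop (nhds s)) (h : ℕ) :
    ∀ᶠ n in atTop, h < t n ∧ t n ≤ n := by
  have hdiff : Tendsto (fun n : ℕ => (t n : ℝ) / n - h / n) atTop (nhds s) := by
    simpa using ht.sub (tendsto_const_div_atTop_nhds_zero_nat (h : ℝ))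
  filter_upwards [hdiff.eventually (lt_mem_nhds hs.1), ht.eventually (gt_mem_nhds hs.2),
    eventually_gt_atTop 0] with n hlt hle hn
  have hn' : (0 : ℝ) < n := Nat.cast_pos.2 hn
  rw [sub_pos, div_lt_div_iff_of_pos_right hn', Nat.cast_lt] at hlt
  rw [div_lt_one hn', Nat.cast_lt] at hle
  exact ⟨hlt, hle.le⟩

lemma tendsto_integral_abs_phat2_div_phat_sub (hK : IsSmoothingKernel K R) (hb : IsBandwidth b)
    (hε : ∀ n t, Measurable (ε n t)) (hα : Summable (alphaMix μ ε))
    (hp : IsJointReturnProb μ v ε 0 p) (hq : IsJointReturnProb μ v ε h q)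
    {t : ℕ → ℕ} {s : ℝ} (hs : s ∈ Ioo (0 : ℝ) 1)
    (ht : Tendsto (fun n => (t n : ℝ) / n) atTop (nhds s))
    (hpc : ContinuousAt p s) (hp0 : 0 < p s) (hqc : ContinuousAt q s) :
    Tendsto (fun n => ∫ ω, |phat2 v ε K b n h (t n) ω / phat v ε K b n (t n) ω -
      q ((t n : ℝ) / n) / p ((t n : ℝ) / n)| ∂μ) atTop (nhds 0) := by
  have hP : Tendsto (fun n => ∫ ω, |phat v ε K b n (t n) ω - p ((t n : ℝ) / n)| ∂μ) atTop
      (nhds 0) := by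
    simp_rw [← phat2_zero]
    exact tendsto_integral_abs_phat2_sub hK hb hε hα hp hs ht hpc
  have hQ := tendsto_integral_abs_phat2_sub hK hb hε hα hq hs ht hqc
  have hbound := (hP.add hQ).const_mul (p s / 2)⁻¹
  rw [add_zero, mul_zero] at hbound
  refine squeeze_zero' (Eventually.of_forall fun n => integral_nonneg fun ω => abs_nonneg _) ?_
    hbound
  filter_upwards [ht.eventually (hpc.eventually (le_mem_nhds (half_lt_self hp0)))] with n hpn
  have hintP : Integrable (fun ω => |phat v ε K b n (t n) ω - p ((t n : ℝ) / n)|) μ := by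
    simp_rw [← phat2_zero]
    exact ((integrable_phat2 hK hε n 0 (t n)).sub (integrable_const _)).abs
  have hintQ : Integrable (fun ω => |phat2 v ε K b n h (t n) ω - q ((t n : ℝ) / n)|) μ :=
    ((integrable_phat2 hK hε n h (t n)).sub (integrable_const _)).abs
  rw [← integral_add hintP hintQ, ← integral_const_mul]
  refine integral_mono_of_nonneg (ae_of_all _ fun ω => abs_nonneg _)
    ((hintP.add hintQ).const_mul _) (ae_of_all _ fun ω => ?_)
  exact abs_div_sub_div_le (half_pos hp0) hpn (phat2_nonneg hK n h (t n) ω)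
    (phat2_le_phat hK n h (t n) ω)

lemma integrable_phat2_div_phat (hK : IsSmoothingKernel K R) (hε : ∀ n t, Measurable (ε n t))
    (n h t : ℕ) : Integrable (fun ω => phat2 v ε K b n h t ω / phat v ε K b n t ω) μ :=
  (memLp_of_nonneg_of_le 1 ((measurable_phat2 hε n h t).div (measurable_phat hε n t))
    (fun ω => (phat2_div_phat_mem_Icc hK n h t ω).1)
    fun ω => (phat2_div_phat_mem_Icc hK n h t ω).2).integrable le_rfl

lemma tendsto_integral_eps_sq_mul_abs_phat2_div_phat_sub (hK : IsSmoothingKernel K R)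
    (hb : IsBandwidth b) (hε : ∀ n t, Measurable (ε n t)) (hα : Summable (alphaMix μ ε))
    (hp : IsJointReturnProb μ v ε 0 p) (hq : IsJointReturnProb μ v ε h q)
    (hui : UniformIntegrable (fun (i : TriangularIndex) ω => ε i.1.1 i.1.2 ω ^ 2) 1 μ)
    {t : ℕ → ℕ} {s : ℝ} (hs : s ∈ Ioo (0 : ℝ) 1)
    (ht : Tendsto (fun n => (t n : ℝ) / n) atTop (nhds s))
    (hpc : ContinuousAt p s) (hp0 : 0 < p s) (hqc : ContinuousAt q s) :
    Tendsto (fun n => ∫ ω, ε n (t n) ω ^ 2 * |phat2 v ε K b n h (t n) ω / phat v ε K b n (t n) ω -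
      q ((t n : ℝ) / n) / p ((t n : ℝ) / n)| ∂μ) atTop (nhds 0) := by
  have hrow := eventually_lt_and_le_of_tendsto_div hs ht h
  refine tendsto_integral_mul_abs zero_le_one ?_ (fun n ω => sq_nonneg _) (fun η hη => ?_)
    (fun n => (integrable_phat2_div_phat hK hε n h (t n)).sub (integrable_const _)) ?_
    (tendsto_integral_abs_phat2_div_phat_sub hK hb hε hα hp hq hs ht hpc hp0 hqc)
  · filter_upwards [hrow] with n hn
    exact (hui.memLp ⟨(n, t n), Nat.one_le_of_lt hn.1, hn.2⟩).integrable le_rfl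
  · obtain ⟨T, -, hT⟩ := exists_forall_integral_max_sub_le hui hη
    refine ⟨T, ?_⟩
    filter_upwards [hrow] with n hn
    exact hT ⟨(n, t n), Nat.one_le_of_lt hn.1, hn.2⟩
  · filter_upwards [hrow] with n hn ω
    exact abs_phat2_div_phat_sub_le_one hK (hp.div_mem_Icc hq hn.1 hn.2) n h (t n) ω

lemma exists_forall_integral_eps_sq_mul_abs_le (hK : IsSmoothingKernel K R)
    (hε : ∀ n t, Measurable (ε n t))
    (hp : IsJointReturnProb μ v ε 0 p) (hq : IsJointReturnProb μ v ε h q)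
    (hui : UniformIntegrable (fun (i : TriangularIndex) ω => ε i.1.1 i.1.2 ω ^ 2) 1 μ) :
    ∃ C, ∀ n t : ℕ, h < t → t ≤ n →
      |∫ ω, ε n t ω ^ 2 * |phat2 v ε K b n h t ω / phat v ε K b n t ω -
        q ((t : ℝ) / n) / p ((t : ℝ) / n)| ∂μ| ≤ C := by
  obtain ⟨T, hT0, hT⟩ := exists_forall_integral_max_sub_le hui one_pos
  refine ⟨T * 1 + 1 * 1, fun n t ht htn => ?_⟩
  have hrow : 1 ≤ t ∧ t ≤ n := ⟨Nat.one_le_of_lt ht, htn⟩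
  have hbound := abs_phat2_div_phat_sub_le_one (v := v) (ε := ε) (b := b) hK
    (hp.div_mem_Icc hq ht htn) n h t
  have hint := (integrable_phat2_div_phat (v := v) (b := b) (μ := μ) hK hε n h t).sub
    (integrable_const (q ((t : ℝ) / n) / p ((t : ℝ) / n)))
  rw [abs_of_nonneg (integral_nonneg fun ω => mul_nonneg (sq_nonneg _) (abs_nonneg _))]
  refine (integral_mul_abs_le T ((hui.memLp ⟨(n, t), hrow⟩).integrable le_rfl)
    (fun ω => sq_nonneg _) hint hbound).trans ?_
  gcongr
  · calc _ ≤ ∫ _, (1 : ℝ) ∂μ := integral_mono hint.abs (integrable_const 1) hbound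
      _ = 1 := by simp
  · exact hT ⟨(n, t), hrow⟩

lemma tendsto_average_integral_eps_sq_mul_abs_phat2_div_phat_sub (hK : IsSmoothingKernel K R)
    (hb : IsBandwidth b) (hε : ∀ n t, Measurable (ε n t)) (hα : Summable (alphaMix μ ε))
    (hp : IsJointReturnProb μ v ε 0 p) (hq : IsJointReturnProb μ v ε h q)
    (hui : UniformIntegrable (fun (i : TriangularIndex) ω => ε i.1.1 i.1.2 ω ^ 2) 1 μ)
    {V : ℝ} (hV : ∀ s ∈ Ioc (0 : ℝ) 1, |v s| ≤ V)
    (hvc : ∀ᵐ s ∂volume.restrict (Ioc (0 : ℝ) 1), ContinuousAt v s)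
    (hpc : ∀ᵐ s ∂volume.restrict (Ioc (0 : ℝ) 1), ContinuousAt p s)
    (hqc : ∀ᵐ s ∂volume.restrict (Ioc (0 : ℝ) 1), ContinuousAt q s)
    (hp0 : ∀ s ∈ Ioc (0 : ℝ) 1, 0 < p s) :
    Tendsto (fun n : ℕ => ((n : ℝ) - h)⁻¹ * ∑ t ∈ Finset.Icc (h + 1) n, v ((t : ℝ) / n) ^ 2 *
      ∫ ω, ε n t ω ^ 2 * |phat2 v ε K b n h t ω / phat v ε K b n t ω -
        q ((t : ℝ) / n) / p ((t : ℝ) / n)| ∂μ) atTop (nhds 0) := by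
  obtain ⟨C, hC⟩ := exists_forall_integral_eps_sq_mul_abs_le hK hε hp hq hui
  rw [← integral_zero ℝ ℝ (μ := volume.restrict (Ioc (0 : ℝ) 1))]
  refine tendsto_average_of_ae_tendsto (C := V ^ 2 * C) h (fun n t ht htn => ?_) ?_
  · have hVt : |v ((t : ℝ) / n)| ≤ V := hV _ (natCast_div_mem_Ioc (Nat.one_le_of_lt ht) htn)
    rw [abs_mul, abs_pow]
    gcongr
    exact hC n t ht htn
  · rw [← Measure.restrict_congr_set Ioo_ae_eq_Ioc] at hvc hpc hqc ⊢
    filter_upwards [hvc, hpc, hqc, ae_restrict_mem measurableSet_Ioo] with s hvs hps hqs hs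
    have hceil := tendsto_natCeil_mul_div hs.1.le
    have hratio := tendsto_integral_eps_sq_mul_abs_phat2_div_phat_sub hK hb hε hα hp hq hui hs
      hceil hps (hp0 s (Ioo_subset_Ioc_self hs)) hqs
    simpa only [mul_zero, Function.comp_apply] using ((hvs.tendsto.comp hceil).pow 2).mul hratio

end RatioEstimator

section LawOfLargeNumbers

variable {Ω : Type*} [MeasurableSpace Ω] {μ : Measure Ω} [IsProbabilityMeasure μ]
  {ε : ℕ → ℕ → Ω → ℝ} {φ : ℝ → ℝ}

lemma integral_abs_average_mul_sub_le (hε : ∀ n t, Measurable (ε n t))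
    (hα : Summable (alphaMix μ ε)) (hφ : Measurable φ) (hφ0 : ∀ x, 0 ≤ φ x) {n h : ℕ} (hhn : h < n)
    (hint : ∀ t ∈ Finset.Icc (h + 1) n, Integrable (fun ω => φ (ε n t ω)) μ)
    {T δ : ℝ} (hT : 0 ≤ T) (hδ : 0 ≤ δ)
    (htail : ∀ t ∈ Finset.Icc (h + 1) n, ∫ ω, max (φ (ε n t ω) - T) 0 ∂μ ≤ δ)
    {d : ℕ → ℝ} {D : ℝ} (hD : 0 ≤ D) (hd : ∀ t ∈ Finset.Icc (h + 1) n, |d t| ≤ D) :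
    ∫ ω, |((n : ℝ) - h)⁻¹ * ∑ t ∈ Finset.Icc (h + 1) n,
      d t * (φ (ε n t ω) - ∫ ω, φ (ε n t ω) ∂μ)| ∂μ ≤
      √(2 * D * (((n : ℝ) - h)⁻¹ * D) * ∑' k, T ^ 2 * lagMix μ ε 0 k) + 2 * D * δ := by
  have hlen : 0 < (n : ℝ) - h := sub_pos.2 (Nat.cast_lt.2 hhn)
  have hmin {m : MeasurableSpace Ω} {t : ℕ} (ht : Measurable[m] (ε n t)) :
      Measurable[m] fun ω => min (φ (ε n t ω)) T := (hφ.comp ht).min measurable_const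
  have hmin0 (t : ℕ) (ω : Ω) : 0 ≤ min (φ (ε n t ω)) T := le_min (hφ0 _) hT
  have hweight : ∀ t ∈ Finset.Icc (h + 1) n, |((n : ℝ) - h)⁻¹ * d t| ≤ ((n : ℝ) - h)⁻¹ * D :=
    fun t ht => by
      rw [abs_mul, abs_of_pos (inv_pos.2 hlen)]
      gcongr
      exact hd t ht
  simp_rw [Finset.mul_sum, ← mul_assoc _ (d _)]
  refine integral_abs_sum_mul_sub_le_of_truncation (X := fun t ω => φ (ε n t ω)) hint
    (fun t _ => memLp_of_nonneg_of_le 2 (hmin (hε n t)) (hmin0 t) fun ω => min_le_right _ _)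
    hδ htail (fun k => mul_nonneg (sq_nonneg T) (lagMix_nonneg 0 k))
    ((summable_lagMix hα 0).mul_left _) (fun i _ j _ hij => ?_) (by positivity) hweight ?_
  · exact abs_covariance_le_lagMix hε hij hT (hmin (measurable_eps_pastField le_rfl)) (hmin0 i)
      (fun ω => min_le_right _ _) (hmin (measurable_eps_futureField le_rfl)) (hmin0 j)
      fun ω => min_le_right _ _
  · refine (Finset.sum_le_sum hweight).trans_eq ?_
    rw [Finset.sum_const, Nat.card_Icc, Nat.add_sub_add_right, nsmul_eq_mul, Nat.cast_sub hhn.le,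
      mul_inv_cancel_left₀ hlen.ne']

lemma tendsto_integral_abs_average_mul_sub (hε : ∀ n t, Measurable (ε n t))
    (hα : Summable (alphaMix μ ε)) (hφ : Measurable φ) (hφ0 : ∀ x, 0 ≤ φ x)
    (hui : UniformIntegrable (fun (i : TriangularIndex) ω => φ (ε i.1.1 i.1.2 ω)) 1 μ)
    {h : ℕ} {d : ℕ → ℕ → ℝ} {D : ℝ} (hD : 0 ≤ D)
    (hd : ∀ n t, h < t → t ≤ n → |d n t| ≤ D) :
    Tendsto (fun n : ℕ => ∫ ω, |((n : ℝ) - h)⁻¹ * ∑ t ∈ Finset.Icc (h + 1) n,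
      d n t * (φ (ε n t ω) - ∫ ω, φ (ε n t ω) ∂μ)| ∂μ) atTop (nhds 0) := by
  refine tendsto_order.2 ⟨fun a ha => Eventually.of_forall fun n => ha.trans_le <|
    integral_nonneg fun ω => abs_nonneg _, fun η hη => ?_⟩
  set δ : ℝ := η / (4 * (D + 1))
  have hδ : 0 < δ := by positivity
  have htail_lt : 2 * D * δ < η := by
    rw [← mul_div_assoc, div_lt_iff₀ (by positivity)]
    nlinarith
  obtain ⟨T, hT0, hT⟩ := exists_forall_integral_max_sub_le hui hδ
  have hvar : Tendsto (fun n : ℕ =>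
      √(2 * D * (((n : ℝ) - h)⁻¹ * D) * ∑' k, T ^ 2 * lagMix μ ε 0 k) + 2 * D * δ) atTop
      (nhds (2 * D * δ)) := by
    have hinv : Tendsto (fun n : ℕ => ((n : ℝ) - h)⁻¹) atTop (nhds 0) :=
      (tendsto_atTop_add_const_right _ (-(h : ℝ)) tendsto_natCast_atTop_atTop).inv_tendsto_atTop
    have := ((((hinv.mul_const D).const_mul (2 * D)).mul_const
      (∑' k, T ^ 2 * lagMix μ ε 0 k)).sqrt).add_const (2 * D * δ)
    simpa only [mul_zero, zero_mul, Real.sqrt_zero, zero_add] using this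
  filter_upwards [hvar.eventually (gt_mem_nhds htail_lt), eventually_gt_atTop h] with n hn hhn
  refine (integral_abs_average_mul_sub_le hε hα hφ hφ0 hhn (fun t ht => ?_) hT0 hδ.le
    (fun t ht => ?_) hD fun t ht => ?_).trans_lt hn
  all_goals obtain ⟨ht1, htn⟩ := Finset.mem_Icc.1 ht
  · exact (hui.memLp ⟨(n, t), Nat.one_le_of_lt ht1, htn⟩).integrable le_rfl
  · exact hT ⟨(n, t), Nat.one_le_of_lt ht1, htn⟩
  · exact hd n t ht1 htn

end LawOfLargeNumbers

section Consistency

variable {Ω : Type*} {v p q : ℝ → ℝ} {ε : ℕ → ℕ → Ω → ℝ} {K : ℝ → ℝ} {R : ℝ} {b : ℕ → ℝ} {h : ℕ}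

lemma gammaAr2_sub_eq (n : ℕ) (G m : ℕ → ℝ) (ω : Ω) :
    gammaAr2 v ε K b n h ω -
        ((n : ℝ) - h)⁻¹ * ∑ t ∈ Finset.Icc (h + 1) n, v ((t : ℝ) / n) ^ 2 * G t * m t =
      ((n : ℝ) - h)⁻¹ * ∑ t ∈ Finset.Icc (h + 1) n, v ((t : ℝ) / n) ^ 2 *
        (ε n t ω ^ 2 * (phat2 v ε K b n h t ω / phat v ε K b n t ω - G t)) +
      ((n : ℝ) - h)⁻¹ * ∑ t ∈ Finset.Icc (h + 1) n, v ((t : ℝ) / n) ^ 2 * G t *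
        (ε n t ω ^ 2 - m t) := by
  rw [gammaAr2, ← mul_sub, ← mul_add, ← Finset.sum_sub_distrib, ← Finset.sum_add_distrib]
  congr 1
  refine Finset.sum_congr rfl fun t _ => ?_
  rw [rproc]
  split_ifs with hP
  · rw [hP, div_zero]
    ring
  · ring

variable [MeasurableSpace Ω] {μ : Measure Ω} [IsProbabilityMeasure μ]

lemma integrable_eps_sq_mul_phat2_div_phat_sub (hK : IsSmoothingKernel K R)
    (hε : ∀ n t, Measurable (ε n t)) {n t : ℕ} (hint : Integrable (fun ω => ε n t ω ^ 2) μ)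
    {x : ℝ} (hx : x ∈ Icc (0 : ℝ) 1) :
    Integrable (fun ω => ε n t ω ^ 2 *
      (phat2 v ε K b n h t ω / phat v ε K b n t ω - x)) μ :=
  hint.mul_bdd
    ((integrable_phat2_div_phat hK hε n h t).sub (integrable_const x)).aestronglyMeasurable
    (ae_of_all _ fun ω => abs_phat2_div_phat_sub_le_one hK hx n h t ω)

lemma integral_abs_gammaAr2_sub_le (hK : IsSmoothingKernel K R) (hε : ∀ n t, Measurable (ε n t))
    {n : ℕ} (hhn : h < n)
    (hint : ∀ t ∈ Finset.Icc (h + 1) n, Integrable (fun ω => ε n t ω ^ 2) μ)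
    {G : ℕ → ℝ} (hG : ∀ t ∈ Finset.Icc (h + 1) n, G t ∈ Icc (0 : ℝ) 1) (m : ℕ → ℝ) :
    ∫ ω, |gammaAr2 v ε K b n h ω -
        ((n : ℝ) - h)⁻¹ * ∑ t ∈ Finset.Icc (h + 1) n, v ((t : ℝ) / n) ^ 2 * G t * m t| ∂μ ≤
      ((n : ℝ) - h)⁻¹ * ∑ t ∈ Finset.Icc (h + 1) n, v ((t : ℝ) / n) ^ 2 *
        ∫ ω, ε n t ω ^ 2 * |phat2 v ε K b n h t ω / phat v ε K b n t ω - G t| ∂μ +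
      ∫ ω, |((n : ℝ) - h)⁻¹ * ∑ t ∈ Finset.Icc (h + 1) n, v ((t : ℝ) / n) ^ 2 * G t *
        (ε n t ω ^ 2 - m t)| ∂μ := by
  have hlen : 0 < (n : ℝ) - h := sub_pos.2 (Nat.cast_lt.2 hhn)
  have hterm : ∀ t ∈ Finset.Icc (h + 1) n, Integrable (fun ω => v ((t : ℝ) / n) ^ 2 *
      (ε n t ω ^ 2 * |phat2 v ε K b n h t ω / phat v ε K b n t ω - G t|)) μ := fun t ht => by
    simpa only [abs_mul, abs_sq] using
      ((integrable_eps_sq_mul_phat2_div_phat_sub hK hε (hint t ht) (hG t ht)).abs).const_mul _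
  have hratio := (integrable_finsetSum _ hterm).const_mul ((n : ℝ) - h)⁻¹
  have hcentered : Integrable (fun ω => |((n : ℝ) - h)⁻¹ * ∑ t ∈ Finset.Icc (h + 1) n,
      v ((t : ℝ) / n) ^ 2 * G t * (ε n t ω ^ 2 - m t)|) μ :=
    ((integrable_finsetSum _ fun t ht =>
      ((hint t ht).sub (integrable_const (m t))).const_mul _).const_mul _).abs
  simp_rw [← integral_const_mul]
  rw [← integral_finsetSum _ hterm, ← integral_const_mul, ← integral_add hratio hcentered]
  refine integral_mono_of_nonneg (ae_of_all _ fun ω => abs_nonneg _) (hratio.add hcentered)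
    (ae_of_all _ fun ω => ?_)
  simp only [gammaAr2_sub_eq]
  refine (abs_add_le _ _).trans (add_le_add_left ?_ _)
  rw [abs_mul, abs_of_pos (inv_pos.2 hlen)]
  gcongr
  refine (Finset.abs_sum_le_sum_abs _ _).trans_eq (Finset.sum_congr rfl fun t _ => ?_)
  rw [abs_mul, abs_mul, abs_sq, abs_sq]

lemma integrable_gammaAr2 (hK : IsSmoothingKernel K R) (hε : ∀ n t, Measurable (ε n t))
    {n : ℕ} (hint : ∀ t ∈ Finset.Icc (h + 1) n, Integrable (fun ω => ε n t ω ^ 2) μ) :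
    Integrable (gammaAr2 v ε K b n h) μ := by
  have hsum : Integrable (fun ω => ((n : ℝ) - h)⁻¹ * ∑ t ∈ Finset.Icc (h + 1) n,
      v ((t : ℝ) / n) ^ 2 * (ε n t ω ^ 2 *
        (phat2 v ε K b n h t ω / phat v ε K b n t ω - 0))) μ :=
    (integrable_finsetSum _ fun t ht => (integrable_eps_sq_mul_phat2_div_phat_sub hK hε
      (hint t ht) (left_mem_Icc.2 zero_le_one)).const_mul _).const_mul _
  refine hsum.congr (ae_of_all _ fun ω => ?_)
  simpa using (gammaAr2_sub_eq n 0 0 ω).symm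

lemma tendstoInMeasure_const_of_tendsto_integral_abs {X : ℕ → Ω → ℝ} {a : ℝ}
    (hX : ∀ n, Integrable (X n) μ)
    (hlim : Tendsto (fun n => ∫ ω, |X n ω - a| ∂μ) atTop (nhds 0)) :
    TendstoInMeasure μ X atTop fun _ => a := by
  refine tendstoInMeasure_of_tendsto_eLpNorm one_ne_zero
    (fun n => (hX n).aestronglyMeasurable) aestronglyMeasurable_const ?_
  have heLp (n : ℕ) : eLpNorm (X n - fun _ => a) 1 μ = ENNReal.ofReal (∫ ω, |X n ω - a| ∂μ) := by
    rw [eLpNorm_one_eq_lintegral_enorm]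
    exact (ofReal_integral_norm_eq_lintegral_enorm ((hX n).sub (integrable_const a))).symm
  simpa only [heLp, ENNReal.ofReal_zero] using ENNReal.tendsto_ofReal hlim

lemma tendsto_integral_abs_gammaAr2_sub_average (hK : IsSmoothingKernel K R) (hb : IsBandwidth b)
    (hε : ∀ n t, Measurable (ε n t)) (hα : Summable (alphaMix μ ε))
    (hp : IsJointReturnProb μ v ε 0 p) (hq : IsJointReturnProb μ v ε h q)
    (hvar : ∀ n t : ℕ, 1 ≤ t → t ≤ n → ∫ ω, ε n t ω ^ 2 ∂μ = p ((t : ℝ) / n))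
    (hui : UniformIntegrable (fun (i : TriangularIndex) ω => ε i.1.1 i.1.2 ω ^ 2) 1 μ)
    {V : ℝ} (hV : ∀ s ∈ Ioc (0 : ℝ) 1, |v s| ≤ V)
    (hvc : ∀ᵐ s ∂volume.restrict (Ioc (0 : ℝ) 1), ContinuousAt v s)
    (hpc : ∀ᵐ s ∂volume.restrict (Ioc (0 : ℝ) 1), ContinuousAt p s)
    (hqc : ∀ᵐ s ∂volume.restrict (Ioc (0 : ℝ) 1), ContinuousAt q s)
    (hp0 : ∀ s ∈ Ioc (0 : ℝ) 1, 0 < p s) :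
    Tendsto (fun n : ℕ => ∫ ω, |gammaAr2 v ε K b n h ω - ((n : ℝ) - h)⁻¹ *
      ∑ t ∈ Finset.Icc (h + 1) n, v ((t : ℝ) / n) ^ 2 * q ((t : ℝ) / n)| ∂μ) atTop (nhds 0) := by
  set G : ℕ → ℕ → ℝ := fun n t => q ((t : ℝ) / n) / p ((t : ℝ) / n)
  have hweight (n t : ℕ) (ht : h < t) (htn : t ≤ n) : |v ((t : ℝ) / n) ^ 2 * G n t| ≤ V ^ 2 := by
    have hG := hp.div_mem_Icc hq ht htn
    rw [abs_mul, abs_pow, abs_of_nonneg hG.1]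
    refine (mul_le_of_le_one_right (by positivity) hG.2).trans ?_
    gcongr
    exact hV _ (natCast_div_mem_Ioc (Nat.one_le_of_lt ht) htn)
  have hmean (n t : ℕ) (ht : t ∈ Finset.Icc (h + 1) n) :
      v ((t : ℝ) / n) ^ 2 * q ((t : ℝ) / n) =
        v ((t : ℝ) / n) ^ 2 * G n t * ∫ ω, ε n t ω ^ 2 ∂μ := by
    obtain ⟨ht1, htn⟩ := Finset.mem_Icc.1 ht
    have ht1 : 1 ≤ t := Nat.one_le_of_lt ht1
    rw [hvar n t ht1 htn, mul_assoc, div_mul_cancel₀ _ (hp0 _ (natCast_div_mem_Ioc ht1 htn)).ne']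
  have hratio := tendsto_average_integral_eps_sq_mul_abs_phat2_div_phat_sub hK hb hε hα hp hq hui
    hV hvc hpc hqc hp0
  have hlln := tendsto_integral_abs_average_mul_sub hε hα (measurable_id.pow_const 2) sq_nonneg hui
    (sq_nonneg V) hweight
  have hbound := hratio.add hlln
  rw [add_zero] at hbound
  refine squeeze_zero' (Eventually.of_forall fun n => integral_nonneg fun ω => abs_nonneg _) ?_
    hbound
  filter_upwards [eventually_gt_atTop h] with n hhn
  rw [Finset.sum_congr rfl (hmean n)]
  refine integral_abs_gammaAr2_sub_le hK hε hhn (fun t ht => ?_) (fun t ht => ?_) _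
  all_goals obtain ⟨ht1, htn⟩ := Finset.mem_Icc.1 ht
  · exact (hui.memLp ⟨(n, t), Nat.one_le_of_lt ht1, htn⟩).integrable le_rfl
  · exact hp.div_mem_Icc hq ht1 htn

lemma tendsto_average_sq_mul (hq : IsJointReturnProb μ v ε h q)
    {V : ℝ} (hV : ∀ s ∈ Ioc (0 : ℝ) 1, |v s| ≤ V)
    (hvc : ∀ᵐ s ∂volume.restrict (Ioc (0 : ℝ) 1), ContinuousAt v s)
    (hqc : ∀ᵐ s ∂volume.restrict (Ioc (0 : ℝ) 1), ContinuousAt q s) :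
    Tendsto (fun n : ℕ => ((n : ℝ) - h)⁻¹ * ∑ t ∈ Finset.Icc (h + 1) n,
      v ((t : ℝ) / n) ^ 2 * q ((t : ℝ) / n)) atTop
      (nhds (∫ s in Ioc (0 : ℝ) 1, v s ^ 2 * q s)) := by
  refine tendsto_average_comp_div (f := fun s => v s ^ 2 * q s) (C := V ^ 2) h
    (fun n t ht htn => ?_) ?_
  · rw [abs_mul, abs_pow, ← hq n t ht htn, abs_of_nonneg measureReal_nonneg]
    refine (mul_le_of_le_one_right (by positivity) measureReal_le_one).trans ?_
    gcongr
    exact hV _ (natCast_div_mem_Ioc (Nat.one_le_of_lt ht) htn)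
  · filter_upwards [hvc, hqc] with s hvs hqs
    exact (hvs.pow 2).mul hqs

theorem stmt8_general (hv0 : ∀ s ∈ Ioc (0 : ℝ) 1, v s ≠ 0)
    {V : ℝ} (hV : ∀ s ∈ Ioc (0 : ℝ) 1, |v s| ≤ V)
    (hvc : ∀ᵐ s ∂volume.restrict (Ioc (0 : ℝ) 1), ContinuousAt v s)
    (hpc : ∀ᵐ s ∂volume.restrict (Ioc (0 : ℝ) 1), ContinuousAt p s)
    (hqc : ∀ᵐ s ∂volume.restrict (Ioc (0 : ℝ) 1), ContinuousAt q s)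
    (hp0 : ∀ s ∈ Ioc (0 : ℝ) 1, 0 < p s)
    (hε : ∀ n t, Measurable (ε n t))
    (hp : IsJointReturnProb μ v ε 0 p) (hq : IsJointReturnProb μ v ε h q)
    (hident : ∀ n t : ℕ, 1 ≤ t → t ≤ n →
      ∫ ω, ε n t ω ^ 2 ∂(μ[|{ω | aproc v ε n t ω = 1}]) = 1)
    (hα : Summable (alphaMix μ ε))
    (hui : UniformIntegrable (fun (i : TriangularIndex) ω => ε i.1.1 i.1.2 ω ^ 2) 1 μ)
    (hK : IsSmoothingKernel K R) (hb : IsBandwidth b) :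
    TendstoInMeasure μ (fun n => gammaAr2 v ε K b n h) atTop
      fun _ => ∫ s in Ioc (0 : ℝ) 1, v s ^ 2 * q s := by
  have hvar (n t : ℕ) (ht : 1 ≤ t) (htn : t ≤ n) : ∫ ω, ε n t ω ^ 2 ∂μ = p ((t : ℝ) / n) :=
    (integral_eps_sq_eq_measureReal (hv0 _ (natCast_div_mem_Ioc ht htn))
      (hident n t ht htn)).trans (hp.measureReal_aproc_eq ht htn)
  have hint (n : ℕ) : Integrable (gammaAr2 v ε K b n h) μ :=
    integrable_gammaAr2 hK hε fun t ht => (hui.memLp ⟨(n, t),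
      Nat.one_le_of_lt (Finset.mem_Icc.1 ht).1, (Finset.mem_Icc.1 ht).2⟩).integrable le_rfl
  have hL1 := tendsto_integral_abs_gammaAr2_sub_average hK hb hε hα hp hq hvar hui hV hvc hpc hqc
    hp0
  have hbias := ((tendsto_average_sq_mul hq hV hvc hqc).sub_const
    (∫ s in Ioc (0 : ℝ) 1, v s ^ 2 * q s)).abs
  have hbound := hL1.add hbias
  rw [sub_self, abs_zero, add_zero] at hbound
  exact tendstoInMeasure_const_of_tendsto_integral_abs hint <|
    squeeze_zero (fun n => integral_nonneg fun ω => abs_nonneg _)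
      (fun n => integral_abs_sub_const_le (hint n) _ _) hbound

end Consistency

/-- Under the non-stationary zero-returns model with mixing and the
kernel/bandwidth assumption, for each `h = 1,…,m` the statistic
`γ̂_{ar²}(h) = (n-h)⁻¹ Σ_{t=1+h}^n r_t² p̂_{t,t-h}/p̂_t` converges in probability to
`∫₀¹ v(s)² g_h(s) ds`. -/
theorem stmt8 {Ω : Type*} [MeasurableSpace Ω] (μ : Measure Ω) [IsProbabilityMeasure μ]
    (m : ℕ) (v : ℝ → ℝ) (g : ℕ → ℝ → ℝ) (c : ℝ) (ε : ℕ → ℕ → Ω → ℝ) (ν μ2 : ℝ)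
    (K : ℝ → ℝ) (R : ℝ) (b : ℕ → ℝ)
    -- deterministic variance function `v`
    (hc : 0 < c)
    (hv_pos : ∀ s ∈ Set.Ioc (0 : ℝ) 1, 0 < v s)
    (hv_bdd : ∃ M, ∀ s ∈ Set.Ioc (0 : ℝ) 1, |v s| ≤ M)
    (hv_lip : PiecewiseLipschitzOn01 v)
    (hv_ext : ∃ L, Tendsto v (nhdsWithin 0 (Set.Ioi 0)) (nhds L) ∧ ∀ u ≤ (0 : ℝ), v u = L)
    -- deterministic zero-returns probability functions `g_h`, `h = 0,…,m`
    (hg_bnd : ∀ h ≤ m, ∀ s ∈ Set.Ioc (0 : ℝ) 1, c < g h s ∧ g h s ≤ 1)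
    (hg_lip : ∀ h ≤ m, PiecewiseLipschitzOn01 (g h))
    (hg_ext : ∀ h ≤ m, ∃ L, Tendsto (g h) (nhdsWithin 0 (Set.Ioi 0)) (nhds L) ∧
      ∀ u ≤ (0 : ℝ), g h u = L)
    -- the innovations are measurable and `P(a_t a_{t-h} = 1) = g_h(t/n)`
    (hε_meas : ∀ n t, Measurable (ε n t))
    (hprob : ∀ h ≤ m, ∀ n t : ℕ, h < t → t ≤ n →
      (μ {ω | aproc v ε n t ω * aproc v ε n (t - h) ω = 1}).toReal = g h ((t : ℝ) / n))
    -- identifiability: `E(ε_t | a_t = 1) = 0` and `E(ε_t² | a_t = 1) = 1`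
    (hident1 : ∀ n t : ℕ, 1 ≤ t → t ≤ n →
      ∫ ω, ε n t ω ∂(μ[|{ω | aproc v ε n t ω = 1}]) = 0)
    (hident2 : ∀ n t : ℕ, 1 ≤ t → t ≤ n →
      ∫ ω, (ε n t ω) ^ 2 ∂(μ[|{ω | aproc v ε n t ω = 1}]) = 1)
    -- conditional strict stationarity
    (hstat : ∀ n k t h : ℕ,
      (μ[|{ω | (∀ i ≤ k, aproc v ε n (t + i) ω = 1) ∧
          ∀ i ≤ k, aproc v ε n (t + h + i) ω = 1}]).map
        (fun ω => fun i : Fin (k + 1) => ε n (t + (i : ℕ)) ω)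
      = (μ[|{ω | (∀ i ≤ k, aproc v ε n (t + i) ω = 1) ∧
          ∀ i ≤ k, aproc v ε n (t + h + i) ω = 1}]).map
        (fun ω => fun i : Fin (k + 1) => ε n (t + h + (i : ℕ)) ω))
    -- strong mixing and moment conditions
    (hν : 0 < ν) (hμ2a : 1 ≤ μ2) (hμ2b : μ2 < 1 + ν) (hμ2c : 1 + ν < 2 * μ2)
    (hmix : Summable (fun h : ℕ => alphaMix μ ε h ^ (1 - 1 / (2 * μ2))))
    (hmom : ∃ M : ℝ, ∀ n t : ℕ, 1 ≤ t → t ≤ n →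
      ∫⁻ ω, ENNReal.ofReal (|ε n t ω| ^ (2 + 2 * ν)) ∂μ ≤ ENNReal.ofReal M)
    -- kernel and bandwidth assumption
    (hK_cont : Continuous K) (hK_supp : HasCompactSupport K)
    (hK_nonneg : ∀ z, 0 ≤ K z) (hK_le : ∀ z, K z ≤ R)
    (hK_int : ∫ z : ℝ, K z = 1)
    (hb_pos : ∀ n, 0 < b n)
    (hb0 : Tendsto b atTop (nhds 0))
    (hnb : Tendsto (fun n : ℕ => 1 / ((n : ℝ) * (b n) ^ 2)) atTop (nhds 0))
    :
    ∀ h : ℕ, 1 ≤ h → h ≤ m →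
      TendstoInMeasure μ (fun n : ℕ => gammaAr2 v ε K b n h) atTop
        (fun _ => ∫ s in Set.Ioc (0 : ℝ) 1, (v s) ^ 2 * g h s) := by
  intro h _ hhm
  obtain ⟨V, hV⟩ := hv_bdd
  obtain ⟨M, hM⟩ := hmom
  exact stmt8_general (fun s hs => (hv_pos s hs).ne') hV hv_lip.ae_continuousAt
    (hg_lip 0 (Nat.zero_le m)).ae_continuousAt (hg_lip h hhm).ae_continuousAt
    (fun s hs => hc.trans (hg_bnd 0 (Nat.zero_le m) s hs).1) hε_meas
    (hprob 0 (Nat.zero_le m)) (hprob h hhm) hident2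
    (summable_alphaMix_of_rpow (sub_le_self 1 (by positivity)) hmix)
    (uniformIntegrable_sq_of_lintegral_rpow_le (fun _ => (hε_meas _ _).aestronglyMeasurable) hν
      fun i => hM i.1.1 i.1.2 i.2.1 i.2.2)
    (isSmoothingKernel_of_continuous hK_cont hK_supp hK_nonneg hK_le (hK_int ▸ one_ne_zero))
    (isBandwidth_of_tendsto hb_pos hb0 hnb)

end ZeroReturnsNS
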